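/- Let Φ = (φ_n)_{n≥1} be a uniformly bounded orthonormal system on [0,1] and let p ∈ P_ln. Then there exists a measure preserving transformation ω : [0,1] → [0,1] and a function f ∈ L^{p(ω(·))}[0,1] such that the set of points x ∈ [0,1] at which sup_{m≥1} |S_m(f,x)| = ∞ (i.e. the Fourier series of f with respect to Φ diverges unboundedly) has positive Lebesgue measure. -/

import Mathlib

open MeasureTheory Set Filter

/-- `φ` (indexed from `1`) is an orthonormal system on `[0,1]`:
`∫_0^1 φ_n φ_m = δ_{nm}`. -/
def IsONS (φ : ℕ → ℝ → ℝ) : Prop :=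
  (∀ n, 1 ≤ n → Measurable (φ n)) ∧
  ∀ n m, 1 ≤ n → 1 ≤ m →
    (∫ t in Set.Icc (0:ℝ) 1, φ n t * φ m t) = if n = m then 1 else 0

/-- `φ` is uniformly bounded by `M` on `[0,1]`. -/
def UnifBounded (φ : ℕ → ℝ → ℝ) (M : ℝ) : Prop :=
  0 < M ∧ ∀ n, 1 ≤ n → ∀ᵐ t ∂(volume.restrict (Set.Icc (0:ℝ) 1)), |φ n t| ≤ M

/-- Fourier coefficient `c_n(f) = ∫_0^1 f φ_n`. -/
noncomputable def fourierCoef (φ : ℕ → ℝ → ℝ) (f : ℝ → ℝ) (n : ℕ) : ℝ :=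
  ∫ t in Set.Icc (0:ℝ) 1, f t * φ n t

/-- Partial sum `S_m(f,x) = ∑_{n=1}^m c_n(f) φ_n(x)`. -/
noncomputable def partialSum (φ : ℕ → ℝ → ℝ) (f : ℝ → ℝ) (m : ℕ) (x : ℝ) : ℝ :=
  ∑ n ∈ Finset.Icc 1 m, fourierCoef φ f n * φ n x

/-- The Luxemburg norm of `f` in the variable exponent Lebesgue space `L^{q(·)}[0,1]`:
`inf {λ > 0 : ∫_0^1 (|f|/λ)^{q(x)} dx ≤ 1}`, with `inf ∅ = ∞`. -/
noncomputable def vpNorm (q f : ℝ → ℝ) : ENNReal :=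
  sInf {l : ENNReal | ∃ r : ℝ, 0 < r ∧ l = ENNReal.ofReal r ∧
    (∫⁻ x in Set.Icc (0:ℝ) 1, ENNReal.ofReal ((|f x| / r) ^ (q x))) ≤ 1}

/-- `ω : [0,1] → [0,1]` is a measure preserving transformation. -/
def MeasurePreserving01 (ω : ℝ → ℝ) : Prop :=
  Set.MapsTo ω (Set.Icc (0:ℝ) 1) (Set.Icc (0:ℝ) 1) ∧
    MeasurePreserving ω (volume.restrict (Set.Icc (0:ℝ) 1))
      (volume.restrict (Set.Icc (0:ℝ) 1))

/-- `p ∈ P_ln`: `p : [0,1] → [1,∞)` is increasing, `p(0) = 1`, `p(t) > 1` for `t ∈ (0,1]`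
and `liminf_{t→0+} (p(t)-1) ln(e/t) < ∞` (i.e. the quantity is frequently bounded near `0+`). -/
def MemPln (p : ℝ → ℝ) : Prop :=
  MonotoneOn p (Set.Icc (0:ℝ) 1) ∧ p 0 = 1 ∧ (∀ t ∈ Set.Ioc (0:ℝ) 1, 1 < p t) ∧
    ∃ C : ℝ, ∃ᶠ t in nhdsWithin 0 (Set.Ioi (0:ℝ)),
      (p t - 1) * Real.log (Real.exp 1 / t) ≤ C

/-- A uniformly bounded orthogonal sequence whose squared norms are at least `1/2`. -/
structure IsNearONS {Ω : Type*} [MeasurableSpace Ω] (P : Measure Ω) (M : ℝ)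
    (ψ : ℕ → Ω → ℝ) : Prop where
  meas : ∀ n, Measurable (ψ n)
  bdd : ∀ n z, |ψ n z| ≤ M
  orth : ∀ n m, n ≠ m → ∫ z, ψ n z * ψ m z ∂P = 0
  half_le : ∀ n, 1 / 2 ≤ ∫ z, ψ n z * ψ n z ∂P

section NearONS

variable {Ω : Type*} [MeasurableSpace Ω] {P : Measure Ω} {M : ℝ} {ψ : ℕ → Ω → ℝ}

lemma IsNearONS.shift (h : IsNearONS P M ψ) (l : ℕ) : IsNearONS P M (fun n => ψ (l + n)) where
  meas n := h.meas _
  bdd n := h.bdd _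
  orth n m hnm := h.orth _ _ (by omega)
  half_le n := h.half_le _

lemma IsNearONS.measurable_sum (h : IsNearONS P M ψ) (s : Finset ℕ) :
    Measurable (fun z => ∑ n ∈ s, ψ n z) :=
  Finset.measurable_fun_sum _ fun n _ => h.meas n

lemma IsNearONS.abs_sum_le (h : IsNearONS P M ψ) (l : ℕ) (z : Ω) :
    |∑ n ∈ Finset.range l, ψ n z| ≤ M * l := by
  refine (Finset.abs_sum_le_sum_abs _ _).trans ?_
  refine (Finset.sum_le_sum fun n _ => h.bdd n z).trans ?_
  simp [mul_comm]

lemma integrable_of_abs_le [IsFiniteMeasure P] {f : Ω → ℝ} (hf : Measurable f) {C : ℝ}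
    (hC : ∀ z, |f z| ≤ C) : Integrable f P :=
  Integrable.of_bound hf.aestronglyMeasurable C (ae_of_all _ hC)

lemma IsNearONS.integrable_sum [IsFiniteMeasure P] (h : IsNearONS P M ψ) (l : ℕ) :
    Integrable (fun z => ∑ n ∈ Finset.range l, ψ n z) P :=
  integrable_of_abs_le (h.measurable_sum _) (h.abs_sum_le l)

lemma IsNearONS.half_le_integral_sq [IsFiniteMeasure P] (h : IsNearONS P M ψ) (l : ℕ) :
    (l : ℝ) / 2 ≤ ∫ z, (∑ n ∈ Finset.range l, ψ n z) ^ 2 ∂P := by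
  have hi : ∀ n m, Integrable (fun z => ψ n z * ψ m z) P := fun n m =>
    integrable_of_abs_le ((h.meas n).mul (h.meas m)) (C := M * M) fun z => by
      rw [abs_mul]
      exact mul_le_mul (h.bdd n z) (h.bdd m z) (abs_nonneg _) ((abs_nonneg _).trans (h.bdd n z))
  have e : ∫ z, (∑ n ∈ Finset.range l, ψ n z) ^ 2 ∂P
      = ∑ n ∈ Finset.range l, ∫ z, ψ n z * ψ n z ∂P := by
    simp_rw [sq, Finset.sum_mul_sum]
    rw [integral_finsetSum _ fun n _ => integrable_finsetSum _ fun m _ => hi n m]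
    refine Finset.sum_congr rfl fun n hn => ?_
    rw [integral_finsetSum _ fun m _ => hi n m, Finset.sum_eq_single n]
    · intro m _ hm
      exact h.orth n m hm.symm
    · intro hn'
      exact absurd hn hn'
  rw [e]
  calc (l : ℝ) / 2 = ∑ n ∈ Finset.range l, (1 / 2 : ℝ) := by simp; ring
    _ ≤ _ := Finset.sum_le_sum fun n _ => h.half_le n

/-- A partial sum of length `l` with `L¹`-norm at most `A` carries a fixed amount of mass at
height at least `l / (4 * A)`. -/
lemma IsNearONS.mass_at_large_height [IsProbabilityMeasure P] (h : IsNearONS P M ψ) (hM : 0 < M)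
    {A : ℝ} (hA : 0 < A) {l : ℕ} (hl : 0 < l)
    (hle : ∫ z, |∑ n ∈ Finset.range l, ψ n z| ∂P ≤ A) :
    ∃ V : Set Ω, MeasurableSet V ∧ P.real V ≤ 4 * A ^ 2 / l ∧
      1 / (4 * M) ≤ ∫ z in V, |∑ n ∈ Finset.range l, ψ n z| ∂P := by
  set G : Ω → ℝ := fun z => ∑ n ∈ Finset.range l, ψ n z with hG
  have hGm : Measurable G := h.measurable_sum _
  have hGi : Integrable (fun z => |G z|) P := (h.integrable_sum l).abs
  have hl' : (0 : ℝ) < l := by exact_mod_cast hl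
  have hVm : MeasurableSet {z | (l : ℝ) / (4 * A) ≤ |G z|} :=
    measurableSet_le measurable_const hGm.abs
  have hsq : Integrable (fun z => (G z) ^ 2) P :=
    integrable_of_abs_le (hGm.pow_const 2) (C := (M * l) ^ 2) fun z => by
      rw [abs_pow]
      exact pow_le_pow_left₀ (abs_nonneg _) (h.abs_sum_le l z) 2
  refine ⟨{z | (l : ℝ) / (4 * A) ≤ |G z|}, hVm, ?_, ?_⟩
  · have := mul_meas_ge_le_integral_of_nonneg (ae_of_all P fun z => abs_nonneg (G z)) hGi
      ((l : ℝ) / (4 * A))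
    have h2 := this.trans hle
    rw [le_div_iff₀ hl']
    have h3 : (l : ℝ) / (4 * A) * P.real {z | (l : ℝ) / (4 * A) ≤ |G z|} * (4 * A) ≤ A * (4 * A) :=
      mul_le_mul_of_nonneg_right h2 (by positivity)
    have h4 : (l : ℝ) / (4 * A) * P.real {z | (l : ℝ) / (4 * A) ≤ |G z|} * (4 * A)
      = P.real {z | (l : ℝ) / (4 * A) ≤ |G z|} * l := by field_simp
    nlinarith
  · set V := {z | (l : ℝ) / (4 * A) ≤ |G z|} with hV
    have h1 := h.half_le_integral_sq l
    rw [← integral_add_compl hVm hsq] at h1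
    have h2 : ∫ z in Vᶜ, (G z) ^ 2 ∂P ≤ l / 4 := by
      calc ∫ z in Vᶜ, (G z) ^ 2 ∂P ≤ ∫ z in Vᶜ, (l : ℝ) / (4 * A) * |G z| ∂P := by
            refine setIntegral_mono_on hsq.integrableOn (hGi.const_mul _).integrableOn hVm.compl ?_
            intro z hz
            have hz' : |G z| < l / (4 * A) := not_le.mp hz
            rw [← sq_abs, sq]
            exact mul_le_mul_of_nonneg_right hz'.le (abs_nonneg _)
        _ ≤ ∫ z, (l : ℝ) / (4 * A) * |G z| ∂P :=
            setIntegral_le_integral (hGi.const_mul _) (ae_of_all _ fun z => by positivity)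
        _ ≤ l / (4 * A) * A := by
            rw [integral_const_mul]
            exact mul_le_mul_of_nonneg_left hle (by positivity)
        _ = l / 4 := by field_simp
    have h3 : ∫ z in V, (G z) ^ 2 ∂P ≤ M * l * ∫ z in V, |G z| ∂P := by
      rw [← integral_const_mul]
      refine setIntegral_mono_on hsq.integrableOn (hGi.const_mul _).integrableOn hVm ?_
      intro z _
      rw [← sq_abs, sq]
      exact mul_le_mul_of_nonneg_right (h.abs_sum_le l z) (abs_nonneg _)
    have h4 : (l : ℝ) / 4 ≤ M * l * ∫ z in V, |G z| ∂P := by linarith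
    rw [div_le_iff₀ (by positivity)]
    have : (l : ℝ) * 1 ≤ l * ((∫ z in V, |G z| ∂P) * (4 * M)) := by nlinarith
    exact le_of_mul_le_mul_left this hl'

lemma list_sum_map_add {ι : Type*} (L : List ι) (f g : ι → ℝ) :
    (L.map fun i => f i + g i).sum = (L.map f).sum + (L.map g).sum := by
  induction L with
  | nil => simp
  | cons a L ih => simp only [List.map_cons, List.sum_cons, ih]; ring

lemma length_mul_le_list_sum {ι : Type*} (L : List ι) (f : ι → ℝ) (c : ℝ)
    (h : ∀ i ∈ L, c ≤ f i) : L.length * c ≤ (L.map f).sum := by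
  induction L with
  | nil => simp
  | cons a L ih =>
    have h1 := h a (by simp)
    have h2 := ih fun i hi => h i (by simp [hi])
    simp only [List.length_cons, List.map_cons, List.sum_cons]
    push_cast
    linarith

lemma exists_growing_offsets [IsProbabilityMeasure P] (hM : 0 < M) {A : ℝ} (hA : 0 < A) (k : ℕ) :
    ∃ (L : List ℕ) (J : ℕ) (u : ℝ), L ≠ [] ∧ (∀ j ∈ L, j ≤ J) ∧ 0 < u ∧
      ∀ ψ : ℕ → Ω → ℝ, IsNearONS P M ψ →
        (∀ i l, i + l ≤ J → ∫ z, |∑ n ∈ Finset.range l, ψ (i + n) z| ∂P ≤ A) →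
        ∀ U : Set Ω, MeasurableSet U → P.real U ≤ u →
        ∀ w : Ω → ℝ, Integrable w P →
          L.length * (k * (1 / (16 * M))) ≤
            (L.map fun j => ∫ z in Uᶜ, |w z + ∑ n ∈ Finset.range j, ψ n z| ∂P).sum := by
  induction k with
  | zero =>
    refine ⟨[0], 0, 1, by simp, by simp, one_pos, ?_⟩
    intro ψ _ _ U _ _ w _
    simp only [List.map_cons, List.sum_cons, List.map_nil, List.sum_nil]
    have : 0 ≤ ∫ z in Uᶜ, |w z + ∑ n ∈ Finset.range 0, ψ n z| ∂P :=
      integral_nonneg fun z => abs_nonneg _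
    simpa using this
  | succ k ih =>
    obtain ⟨L, J, u, hL, hLJ, hu, ih⟩ := ih
    obtain ⟨l, hl⟩ := exists_nat_gt (max 1 (max (8 * A ^ 2 / u) (128 * M ^ 2 * A ^ 2 * J)))
    have hl1 : (1 : ℝ) < l := (le_max_left _ _).trans_lt hl
    have hl2 : 8 * A ^ 2 / u < l := ((le_max_left _ _).trans (le_max_right _ _)).trans_lt hl
    have hl3 : 128 * M ^ 2 * A ^ 2 * J < l :=
      ((le_max_right _ _).trans (le_max_right _ _)).trans_lt hl
    have hl0 : (0 : ℝ) < l := by linarith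
    have hlN : 0 < l := by exact_mod_cast hl0
    refine ⟨L ++ L.map (fun j => l + j), l + J, min (u / 2) (1 / (16 * M ^ 2 * l)), by simp [hL],
      ?_, by positivity, ?_⟩
    · intro j hj
      rcases List.mem_append.mp hj with hj | hj
      · exact (hLJ j hj).trans (by omega)
      · obtain ⟨i, hi, rfl⟩ := List.mem_map.mp hj
        have := hLJ i hi
        omega
    intro ψ hψ hb U hU hUu w hw
    obtain ⟨V, hV, hVs, hVm⟩ := hψ.mass_at_large_height hM hA hlN
      (by simpa using hb 0 l (by omega))
    set G : Ω → ℝ := fun z => ∑ n ∈ Finset.range l, ψ n z with hG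
    have hGi : Integrable G P := hψ.integrable_sum l
    have hUV : P.real (U ∪ V) ≤ u := by
      refine (measureReal_union_le _ _).trans ?_
      have : 4 * A ^ 2 / l ≤ u / 2 := by
        rw [div_lt_iff₀ hu] at hl2
        rw [div_le_iff₀ hl0]
        linarith
      have := hUu.trans (min_le_left _ _)
      linarith
    have i1 := ih ψ hψ (fun i l' h => hb i l' (by omega)) (U ∪ V) (hU.union hV) hUV w hw
    have i2 := ih _ (hψ.shift l)
      (fun i l' h => by simpa [add_assoc] using hb (l + i) l' (by omega)) (U ∪ V)
      (hU.union hV) hUV (fun z => w z + G z) (hw.add hGi)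
    -- the two translates differ by almost `G` on `V \ U`
    have hsplit : ∀ f : Ω → ℝ, Integrable f P →
        ∫ z in Uᶜ, |f z| ∂P = ∫ z in (U ∪ V)ᶜ, |f z| ∂P + ∫ z in V \ U, |f z| ∂P := by
      intro f hf
      have : Uᶜ = (U ∪ V)ᶜ ∪ (V \ U) := by
        ext z
        simp only [mem_compl_iff, mem_union, Set.mem_sdiff]
        tauto
      rw [this, setIntegral_union _ (hV.diff hU) hf.abs.integrableOn hf.abs.integrableOn]
      rw [Set.disjoint_left]
      intro z hz hz'
      exact hz (Or.inr hz'.1)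
    have hgi : ∀ j, Integrable (fun z => w z + ∑ n ∈ Finset.range j, ψ n z) P := fun j =>
      hw.add (hψ.integrable_sum j)
    have key : ∀ j ∈ L, 2 * (1 / (16 * M)) ≤
        ∫ z in V \ U, |w z + ∑ n ∈ Finset.range j, ψ n z| ∂P +
        ∫ z in V \ U, |w z + ∑ n ∈ Finset.range (l + j), ψ n z| ∂P := by
      intro j hj
      have hjJ : (j : ℝ) ≤ J := by exact_mod_cast hLJ j hj
      have hj0 : (0 : ℝ) ≤ j := Nat.cast_nonneg j
      rw [← integral_add (hgi j).abs.integrableOn (hgi (l + j)).abs.integrableOn]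
      have s1 : ∫ z in V \ U, (|G z| - 2 * (M * J)) ∂P ≤ ∫ z in V \ U,
          (|w z + ∑ n ∈ Finset.range j, ψ n z| + |w z + ∑ n ∈ Finset.range (l + j), ψ n z|) ∂P := by
        refine integral_mono (hGi.abs.sub (integrable_const _)).integrableOn
          ((hgi j).abs.add (hgi (l + j)).abs).integrableOn fun z => ?_
        have a1 := hψ.abs_sum_le j z
        have a2 := (hψ.shift l).abs_sum_le j z
        have a3 : M * j ≤ M * J := mul_le_mul_of_nonneg_left hjJ hM.le
        have e : ∑ n ∈ Finset.range (l + j), ψ n z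
            = G z + ∑ n ∈ Finset.range j, ψ (l + n) z := Finset.sum_range_add _ _ _
        have a4 := abs_le.mp (a1.trans a3)
        have a5 := abs_le.mp (a2.trans a3)
        simp only
        rw [e]
        have b1 := neg_abs_le (w z + ∑ n ∈ Finset.range j, ψ n z)
        have b2 := le_abs_self (w z + ∑ n ∈ Finset.range j, ψ n z)
        have b3 := neg_abs_le (w z + (G z + ∑ n ∈ Finset.range j, ψ (l + n) z))
        have b4 := le_abs_self (w z + (G z + ∑ n ∈ Finset.range j, ψ (l + n) z))
        rcases abs_cases (G z) with ⟨hc, _⟩ | ⟨hc, _⟩ <;> rw [hc] <;>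
          linarith [a4.1, a4.2, a5.1, a5.2]
      refine le_trans ?_ s1
      rw [integral_sub hGi.abs.integrableOn (integrable_const _).integrableOn, setIntegral_const,
        smul_eq_mul]
      have s2 : ∫ z in V, |G z| ∂P ≤ ∫ z in V \ U, |G z| ∂P + ∫ z in U, |G z| ∂P := by
        rw [← setIntegral_union Set.disjoint_sdiff_left hU hGi.abs.integrableOn
          hGi.abs.integrableOn]
        refine setIntegral_mono_set hGi.abs.integrableOn (ae_of_all _ fun z => abs_nonneg _) ?_
        refine LE.le.eventuallyLE ?_
        intro z hz
        by_cases h : z ∈ U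
        · exact Or.inr h
        · exact Or.inl ⟨hz, h⟩
      have s3 : ∫ z in U, |G z| ∂P ≤ 1 / (16 * M) := by
        calc ∫ z in U, |G z| ∂P ≤ ∫ z in U, M * l ∂P :=
              integral_mono hGi.abs.integrableOn (integrable_const _).integrableOn
                fun z => hψ.abs_sum_le l z
          _ = P.real U * (M * l) := by rw [setIntegral_const, smul_eq_mul]
          _ ≤ 1 / (16 * M ^ 2 * l) * (M * l) :=
              mul_le_mul_of_nonneg_right (hUu.trans (min_le_right _ _)) (by positivity)
          _ = 1 / (16 * M) := by field_simp
      have s4 : P.real (V \ U) * (2 * (M * J)) ≤ 1 / (16 * M) := by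
        calc P.real (V \ U) * (2 * (M * J)) ≤ 4 * A ^ 2 / l * (2 * (M * J)) :=
              mul_le_mul_of_nonneg_right ((measureReal_mono Set.sdiff_subset).trans hVs)
                (by positivity)
          _ = (128 * M ^ 2 * A ^ 2 * J) / l * (1 / (16 * M)) := by field_simp; ring
          _ ≤ 1 * (1 / (16 * M)) := by
              refine mul_le_mul_of_nonneg_right ?_ (by positivity)
              rw [div_le_one hl0]
              exact hl3.le
          _ = _ := one_mul _
      have e4 : 1 / (4 * M) = 4 * (1 / (16 * M)) := by field_simp; norm_num
      linarith
    have key' := length_mul_le_list_sum L _ _ key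
    rw [list_sum_map_add] at key'
    simp only [List.map_append, List.map_map, List.sum_append, List.length_append, List.length_map,
      Function.comp_def]
    have e1 : ∀ j, ∫ z in (U ∪ V)ᶜ, |w z + G z + ∑ n ∈ Finset.range j, ψ (l + n) z| ∂P
        = ∫ z in (U ∪ V)ᶜ, |w z + ∑ n ∈ Finset.range (l + j), ψ n z| ∂P := by
      intro j
      congr 1
      ext z
      rw [Finset.sum_range_add, ← add_assoc]
    simp_rw [e1] at i2
    simp_rw [hsplit _ (hgi _)]
    rw [list_sum_map_add, list_sum_map_add]
    push_cast
    linarith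

/-- **Growth of Lebesgue constants.** The partial sums of a uniformly bounded orthogonal sequence
whose norms are bounded below are unbounded in `L¹`, with a rate depending on the bound only. -/
theorem exists_forall_exists_le_integral_abs_sum (P : Measure Ω) [IsProbabilityMeasure P]
    (hM : 0 < M) (A : ℝ) :
    ∃ J : ℕ, ∀ ψ : ℕ → Ω → ℝ, IsNearONS P M ψ →
      ∃ j ≤ J, A ≤ ∫ z, |∑ n ∈ Finset.range j, ψ n z| ∂P := by
  wlog hA : 0 < A generalizing A
  · obtain ⟨J, hJ⟩ := this 1 one_pos
    refine ⟨J, fun ψ hψ => ?_⟩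
    obtain ⟨j, hj, h⟩ := hJ ψ hψ
    exact ⟨j, hj, by linarith⟩
  obtain ⟨k, hk⟩ := exists_nat_gt (A / (1 / (16 * M)))
  rw [div_lt_iff₀ (by positivity)] at hk
  obtain ⟨L, J, u, hL, hLJ, hu, H⟩ :=
    exists_growing_offsets (Ω := Ω) (P := P) hM (A := 2 * A) (by positivity) k
  refine ⟨J, fun ψ hψ => ?_⟩
  by_contra! hcon
  have h1 := H ψ hψ (fun i l hil => by
    have a1 := hcon i (by omega)
    have a2 := hcon (i + l) hil
    calc ∫ z, |∑ n ∈ Finset.range l, ψ (i + n) z| ∂P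
        ≤ ∫ z, (|∑ n ∈ Finset.range (i + l), ψ n z| + |∑ n ∈ Finset.range i, ψ n z|) ∂P := by
          refine integral_mono ((hψ.shift i).integrable_sum l).abs
            ((hψ.integrable_sum _).abs.add (hψ.integrable_sum _).abs) fun z => ?_
          simp only [Finset.sum_range_add]
          refine le_trans (le_of_eq ?_) (abs_sub _ _)
          congr 1
          ring
      _ ≤ 2 * A := by
          rw [integral_add (hψ.integrable_sum _).abs (hψ.integrable_sum _).abs]
          linarith) ∅ MeasurableSet.empty (by simpa using hu.le) (fun _ => 0)
    (integrable_zero _ _ _)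
  have h2 : (L.map fun j => ∫ z in (∅ : Set Ω)ᶜ, |0 + ∑ n ∈ Finset.range j, ψ n z| ∂P).sum
      ≤ L.length * A := by
    refine (List.sum_le_card_nsmul _ A fun x hx => ?_).trans (by simp)
    obtain ⟨j, hj, rfl⟩ := List.mem_map.mp hx
    simpa using (hcon j (hLJ j hj)).le
  have hlen : (0 : ℝ) < L.length := by exact_mod_cast List.length_pos_of_ne_nil hL
  nlinarith

end NearONS

/-- A uniformly bounded orthonormal sequence, with the bound holding everywhere. -/
structure IsBddONS {Ω : Type*} [MeasurableSpace Ω] (μ : Measure Ω) (M : ℝ)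
    (φ : ℕ → Ω → ℝ) : Prop where
  meas : ∀ n, Measurable (φ n)
  bdd : ∀ n z, |φ n z| ≤ M
  orth : ∀ n m, ∫ z, φ n z * φ m z ∂μ = if n = m then 1 else 0

/-- The block `∑_{m ≤ n < m + j} φ_n(x) φ_n(y)` of the Dirichlet kernel. -/
def kernelBlock {Ω : Type*} (φ : ℕ → Ω → ℝ) (m j : ℕ) (x y : Ω) : ℝ :=
  ∑ n ∈ Finset.range j, φ (m + n) x * φ (m + n) y

section BddONS

variable {Ω : Type*} [MeasurableSpace Ω] {μ : Measure Ω} {M : ℝ} {φ : ℕ → Ω → ℝ}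

lemma IsBddONS.one_le [IsProbabilityMeasure μ] (h : IsBddONS μ M φ) : 1 ≤ M ^ 2 := by
  have h1 := h.orth 0 0
  simp only [if_true] at h1
  rw [← h1]
  have : ∫ z, φ 0 z * φ 0 z ∂μ ≤ ∫ _, M ^ 2 ∂μ := by
    refine integral_mono_of_nonneg (ae_of_all _ fun z => mul_self_nonneg _) (integrable_const _)
      (ae_of_all _ fun z => ?_)
    change φ 0 z * φ 0 z ≤ M ^ 2
    rw [← sq, ← sq_abs]
    exact pow_le_pow_left₀ (abs_nonneg _) (h.bdd 0 z) 2
  simpa using this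

lemma IsBddONS.nonneg [IsProbabilityMeasure μ] (h : IsBddONS μ M φ) : 0 ≤ M := by
  have : Nonempty Ω := nonempty_of_isProbabilityMeasure μ
  exact (abs_nonneg _).trans (h.bdd 0 (Classical.arbitrary Ω))

lemma IsBddONS.pos [IsProbabilityMeasure μ] (h : IsBddONS μ M φ) : 0 < M := by
  have h1 := h.one_le
  have h2 := h.nonneg
  nlinarith

lemma IsBddONS.abs_kernelBlock_le (h : IsBddONS μ M φ) (m j : ℕ) (x y : Ω) :
    |kernelBlock φ m j x y| ≤ M ^ 2 * j := by
  refine (Finset.abs_sum_le_sum_abs _ _).trans ?_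
  refine (Finset.sum_le_sum (g := fun _ => M ^ 2) fun _ _ => ?_).trans ?_
  · rw [abs_mul, sq]
    exact mul_le_mul (h.bdd _ x) (h.bdd _ y) (abs_nonneg _) ((abs_nonneg _).trans (h.bdd 0 x))
  · simp [mul_comm]

lemma IsBddONS.measurable_kernelBlock (h : IsBddONS μ M φ) (m j : ℕ) :
    Measurable (fun z : Ω × Ω => kernelBlock φ m j z.1 z.2) :=
  Finset.measurable_fun_sum _ fun _ _ =>
    ((h.meas _).comp measurable_fst).mul ((h.meas _).comp measurable_snd)

lemma IsBddONS.measurable_integral_kernelBlock [IsProbabilityMeasure μ] (h : IsBddONS μ M φ)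
    (m j : ℕ) : Measurable (fun x => ∫ y, |kernelBlock φ m j x y| ∂μ) :=
  ((h.measurable_kernelBlock m j).abs.stronglyMeasurable.integral_prod_right).measurable

lemma IsBddONS.measurableSet_lebesgue [IsProbabilityMeasure μ] (h : IsBddONS μ M φ)
    (A : ℝ) (J m : ℕ) :
    MeasurableSet {x | ∃ j ≤ J, A ≤ ∫ y, |kernelBlock φ m j x y| ∂μ} := by
  have : {x | ∃ j ≤ J, A ≤ ∫ y, |kernelBlock φ m j x y| ∂μ}
      = ⋃ j ∈ Finset.range (J + 1), {x | A ≤ ∫ y, |kernelBlock φ m j x y| ∂μ} := by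
    ext x
    simp
  rw [this]
  exact Finset.measurableSet_biUnion _ fun j _ =>
    measurableSet_le measurable_const (h.measurable_integral_kernelBlock m j)

/-- Tensor squares of a bounded orthonormal system, cut off to a large set in one variable. -/
lemma IsBddONS.isNearONS_tensor [IsProbabilityMeasure μ] (h : IsBddONS μ M φ) {X : Set Ω}
    (hX : MeasurableSet X) (hXc : μ.real Xᶜ ≤ 1 / (2 * M ^ 2)) (m : ℕ) :
    IsNearONS (μ.prod μ) (M ^ 2)
      (fun n z => X.indicator (φ (m + n)) z.1 * φ (m + n) z.2) where
  meas n := (((h.meas _).indicator hX).comp measurable_fst).mul ((h.meas _).comp measurable_snd)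
  bdd n z := by
    rw [abs_mul, sq]
    refine mul_le_mul ?_ (h.bdd _ _) (abs_nonneg _) h.nonneg
    by_cases hz : z.1 ∈ X
    · simpa [hz] using h.bdd _ z.1
    · simpa [hz] using h.nonneg
  orth n k hnk := by
    have e : ∀ z : Ω × Ω, X.indicator (φ (m + n)) z.1 * φ (m + n) z.2 *
        (X.indicator (φ (m + k)) z.1 * φ (m + k) z.2)
        = (X.indicator (φ (m + n)) z.1 * X.indicator (φ (m + k)) z.1) *
          (φ (m + n) z.2 * φ (m + k) z.2) := fun z => by ring
    simp_rw [e]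
    rw [integral_prod_mul (fun x => X.indicator (φ (m + n)) x * X.indicator (φ (m + k)) x)
      (fun y => φ (m + n) y * φ (m + k) y), h.orth, if_neg (by omega), mul_zero]
  half_le n := by
    have e : ∀ z : Ω × Ω, X.indicator (φ (m + n)) z.1 * φ (m + n) z.2 *
        (X.indicator (φ (m + n)) z.1 * φ (m + n) z.2)
        = (X.indicator (fun x => φ (m + n) x * φ (m + n) x) z.1) *
          (φ (m + n) z.2 * φ (m + n) z.2) := fun z => by
      by_cases hz : z.1 ∈ X
      · simp only [hz, indicator_of_mem]
        ring
      · simp [hz]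
    simp_rw [e]
    rw [integral_prod_mul (fun x => X.indicator (fun x => φ (m + n) x * φ (m + n) x) x)
      (fun y => φ (m + n) y * φ (m + n) y), h.orth, if_pos rfl, mul_one, integral_indicator hX]
    have hb : ∀ z, |φ (m + n) z * φ (m + n) z| ≤ M ^ 2 := fun z => by
      rw [abs_mul, sq]
      exact mul_le_mul (h.bdd _ _) (h.bdd _ _) (abs_nonneg _) h.nonneg
    have hi : Integrable (fun z => φ (m + n) z * φ (m + n) z) μ :=
      integrable_of_abs_le ((h.meas _).mul (h.meas _)) hb
    have h1 := integral_add_compl hX hi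
    rw [h.orth, if_pos rfl] at h1
    have h2 : ∫ z in Xᶜ, φ (m + n) z * φ (m + n) z ∂μ ≤ 1 / 2 := by
      calc ∫ z in Xᶜ, φ (m + n) z * φ (m + n) z ∂μ ≤ ∫ z in Xᶜ, M ^ 2 ∂μ :=
            integral_mono hi.integrableOn (integrable_const _).integrableOn
              fun z => (le_abs_self _).trans (hb z)
        _ = μ.real Xᶜ * M ^ 2 := by rw [setIntegral_const, smul_eq_mul]
        _ ≤ 1 / (2 * M ^ 2) * M ^ 2 := mul_le_mul_of_nonneg_right hXc (by positivity)
        _ = 1 / 2 := by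
            have := h.pos
            field_simp
    linarith

/-- The local Lebesgue functions of a bounded orthonormal system are large on sets whose measure
is bounded below, uniformly in the position of the block. -/
lemma IsBddONS.exists_lebesgue_large [IsProbabilityMeasure μ] (h : IsBddONS μ M φ) (A : ℝ) :
    ∃ J : ℕ, ∀ m, 1 / (2 * M ^ 2) ≤
      μ.real {x | ∃ j ≤ J, A ≤ ∫ y, |kernelBlock φ m j x y| ∂μ} := by
  have hM := h.pos
  obtain ⟨J, hJ⟩ := exists_forall_exists_le_integral_abs_sum (μ.prod μ) (M := M ^ 2)
    (by positivity) (|A| + 1)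
  refine ⟨J, fun m => ?_⟩
  by_contra! hcon
  have hS := h.measurableSet_lebesgue A J m
  set S := {x | ∃ j ≤ J, A ≤ ∫ y, |kernelBlock φ m j x y| ∂μ} with hSdef
  obtain ⟨j, hj, hA⟩ := hJ _ (h.isNearONS_tensor hS.compl (by simpa using hcon.le) m)
  have e : ∀ z : Ω × Ω, |∑ n ∈ Finset.range j, Sᶜ.indicator (φ (m + n)) z.1 * φ (m + n) z.2|
      = Sᶜ.indicator (fun x => |kernelBlock φ m j x z.2|) z.1 := fun z => by
    by_cases hz : z.1 ∈ S
    · simp [hz]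
    · simp [hz, kernelBlock]
  simp_rw [e] at hA
  rw [integral_prod] at hA
  · have h1 : ∀ x, ∫ y, Sᶜ.indicator (fun x => |kernelBlock φ m j x y|) x ∂μ ≤ |A| := by
      intro x
      by_cases hx : x ∈ S
      · simp [hx]
      · have h2 : ∫ y, |kernelBlock φ m j x y| ∂μ < A := by
          by_contra! h3
          exact hx ⟨j, hj, h3⟩
        simpa [hx] using h2.le.trans (le_abs_self A)
    have h2 : ∫ x, ∫ y, Sᶜ.indicator (fun x => |kernelBlock φ m j x y|) x ∂μ ∂μ
        ≤ ∫ _, |A| ∂μ := by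
      refine integral_mono_of_nonneg (ae_of_all _ fun x => integral_nonneg fun y => ?_)
        (integrable_const _) (ae_of_all _ h1)
      exact indicator_nonneg (fun _ _ => abs_nonneg _) _
    rw [integral_const] at h2
    simp only [probReal_univ, smul_eq_mul, one_mul] at h2
    linarith
  · refine integrable_of_abs_le (C := M ^ 2 * j) ?_ fun z => ?_
    · have : (fun z : Ω × Ω => Sᶜ.indicator (fun x => |kernelBlock φ m j x z.2|) z.1)
        = (Prod.fst ⁻¹' Sᶜ).indicator (fun z : Ω × Ω => |kernelBlock φ m j z.1 z.2|) := by
        ext z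
        by_cases hz : z.1 ∈ S <;> simp [hz]
      rw [this]
      exact (h.measurable_kernelBlock m j).abs.indicator (measurable_fst hS.compl)
    · by_cases hz : z.1 ∈ S
      · simp only [mem_compl_iff, hz, not_true_eq_false, not_false_eq_true, indicator_of_notMem,
          abs_zero]
        positivity
      · simpa [hz] using h.abs_kernelBlock_le m j z.1 z.2

lemma IsBddONS.memLp [IsProbabilityMeasure μ] (h : IsBddONS μ M φ) (n : ℕ) :
    MemLp (φ n) 2 μ :=
  MemLp.of_bound (h.meas n).aestronglyMeasurable M (ae_of_all _ (h.bdd n))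

lemma IsBddONS.orthonormal [IsProbabilityMeasure μ] (h : IsBddONS μ M φ) :
    Orthonormal ℝ (fun n => (h.memLp n).toLp (φ n)) := by
  rw [orthonormal_iff_ite]
  intro n m
  rw [L2.inner_def, ← h.orth n m]
  refine integral_congr_ae ?_
  filter_upwards [(h.memLp n).coeFn_toLp, (h.memLp m).coeFn_toLp] with z h1 h2
  rw [h1, h2]
  simp [mul_comm]

/-- Riemann–Lebesgue: the Fourier coefficients of an indicator tend to zero. -/
lemma IsBddONS.tendsto_setIntegral [IsProbabilityMeasure μ] (h : IsBddONS μ M φ) {S : Set Ω}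
    (hS : MeasurableSet S) : Tendsto (fun n => ∫ z in S, φ n z ∂μ) atTop (nhds 0) := by
  have hs := (h.orthonormal.inner_products_summable
    (indicatorConstLp 2 hS (measure_ne_top μ S) (1 : ℝ))).tendsto_atTop_zero
  have h1 : ∀ n, inner ℝ ((h.memLp n).toLp (φ n))
      (indicatorConstLp 2 hS (measure_ne_top μ S) (1 : ℝ)) = ∫ z in S, φ n z ∂μ := by
    intro n
    rw [real_inner_comm, L2.inner_indicatorConstLp_one]
    exact setIntegral_congr_ae hS ((h.memLp n).coeFn_toLp.mono fun z hz _ => hz)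
  simp_rw [h1] at hs
  rw [tendsto_zero_iff_norm_tendsto_zero]
  have := (Real.continuous_sqrt.tendsto 0).comp hs
  simpa [Function.comp_def, Real.sqrt_sq_eq_abs] using this

/-- Kernel blocks are weakly null in the second variable, uniformly in the first one. -/
lemma IsBddONS.eventually_abs_setIntegral_kernelBlock_le [IsProbabilityMeasure μ]
    (h : IsBddONS μ M φ) {S : Set Ω} (hS : MeasurableSet S) (J : ℕ) {ε : ℝ} (hε : 0 < ε) :
    ∀ᶠ m in atTop, ∀ j ≤ J, ∀ x, |∫ y in S, kernelBlock φ m j x y ∂μ| ≤ ε := by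
  have hM := h.pos
  have h1 := (h.tendsto_setIntegral hS).abs
  rw [abs_zero] at h1
  have h2 := h1.eventually (gt_mem_nhds (show 0 < ε / (M * (J + 1)) by positivity))
  obtain ⟨m₀, hm₀⟩ := eventually_atTop.mp h2
  filter_upwards [eventually_ge_atTop m₀] with m hm j hj x
  have e : ∫ y in S, kernelBlock φ m j x y ∂μ
      = ∑ n ∈ Finset.range j, φ (m + n) x * ∫ y in S, φ (m + n) y ∂μ := by
    unfold kernelBlock
    rw [integral_finsetSum]
    · simp_rw [integral_const_mul]
    · intro n _
      exact ((integrable_of_abs_le (h.meas _) (h.bdd _)).const_mul _).integrableOn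
  rw [e]
  refine (Finset.abs_sum_le_sum_abs _ _).trans ?_
  calc ∑ n ∈ Finset.range j, |φ (m + n) x * ∫ y in S, φ (m + n) y ∂μ|
      ≤ ∑ n ∈ Finset.range j, M * (ε / (M * (J + 1))) := by
        refine Finset.sum_le_sum fun n _ => ?_
        rw [abs_mul]
        exact mul_le_mul (h.bdd _ _) (hm₀ _ (by omega)).le (abs_nonneg _) hM.le
    _ = j / (J + 1) * ε := by
        rw [Finset.sum_const, Finset.card_range, nsmul_eq_mul]
        field_simp
    _ ≤ 1 * ε := by
        refine mul_le_mul_of_nonneg_right ?_ hε.le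
        rw [div_le_one (by positivity)]
        have : (j : ℝ) ≤ J := by exact_mod_cast hj
        linarith
    _ = ε := one_mul _

end BddONS

section Alignment

variable {Ω : Type*} [MeasurableSpace Ω] {μ : Measure Ω}

/-- A bounded function with small mean over `P` exceeds the mean of its positive part, up to a
constant, on a definite proportion of `P`. -/
lemma measureReal_inter_ge_of_abs_setIntegral_le [IsProbabilityMeasure μ] {h : Ω → ℝ} {B : ℝ}
    (hm : Measurable h) (hB : 1 ≤ B) (hb : ∀ y, |h y| ≤ B) {P : Set Ω}
    (hw : |∫ y in P, h y ∂μ| ≤ 1 / 2 * μ.real P) {b : ℝ}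
    (hbP : b * μ.real P = ∫ y in P, max (h y) 0 ∂μ) :
    1 / (4 * B) * μ.real P ≤ μ.real (P ∩ {y | b - 3 ≤ h y}) := by
  have hY : MeasurableSet {y | b - 3 ≤ h y} := measurableSet_le measurable_const hm
  set Y := {y | b - 3 ≤ h y} with hYdef
  set a := μ.real P
  set q := μ.real (P ∩ Y)
  have ha : 0 ≤ a := measureReal_nonneg
  have hq : 0 ≤ q := measureReal_nonneg
  have hi : Integrable h μ := integrable_of_abs_le hm hb
  have hpi : Integrable (fun y => max (h y) 0) μ := hi.pos_part
  have hind : ∀ C : ℝ, ∫ y in P, Y.indicator (fun _ => C) y ∂μ = q * C := fun C => by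
    rw [setIntegral_indicator hY, setIntegral_const, smul_eq_mul]
  have hindi : ∀ C : ℝ, Integrable (Y.indicator fun _ => C) μ := fun C =>
    (integrable_const C).indicator hY
  have key : a ≤ 4 * B * q := by
    by_cases hb1 : 1 < b
    · have h1 : ∫ y in P, max (h y) 0 ∂μ ≤ ∫ y in P, ((b - 1) + Y.indicator (fun _ => B) y) ∂μ := by
        refine integral_mono hpi.integrableOn
          ((integrable_const _).add (hindi B)).integrableOn fun y => ?_
        have h2 := abs_le.mp (hb y)
        by_cases hy : y ∈ Y
        · simp only [hy, indicator_of_mem]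
          exact max_le (by linarith) (by linarith)
        · have h3 : h y < b - 3 := not_le.mp hy
          simp only [hy, not_false_eq_true, indicator_of_notMem]
          exact max_le (by linarith) (by linarith)
      rw [integral_add (integrable_const _) (hindi B).integrableOn, hind, setIntegral_const,
        smul_eq_mul, ← hbP] at h1
      change b * a ≤ a * (b - 1) + q * B at h1
      nlinarith
    · have hsi : Integrable (fun y => max (h y) 0 - 2) μ := hpi.sub (integrable_const _)
      have h1 : ∫ y in P, h y ∂μ ≤ ∫ y in P, (max (h y) 0 - 2 + Y.indicator (fun _ => 2) y) ∂μ := by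
        refine integral_mono hi.integrableOn
          (hsi.add (hindi 2)).integrableOn fun y => ?_
        by_cases hy : y ∈ Y
        · simp [hy]
        · have h3 : h y < b - 3 := not_le.mp hy
          have h4 := le_max_right (h y) 0
          simp only [hy, not_false_eq_true, indicator_of_notMem]
          linarith
      rw [integral_add hsi.integrableOn (hindi 2).integrableOn, hind,
        integral_sub hpi.integrableOn (integrable_const _), setIntegral_const,
        smul_eq_mul, ← hbP] at h1
      change _ ≤ b * a - a * 2 + q * 2 at h1
      have h2 := (abs_le.mp hw).1
      change -(1 / 2 * a) ≤ _ at h2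
      nlinarith
  rw [div_mul_eq_mul_div, one_mul, div_le_iff₀ (by positivity)]
  linarith

/-- Chebyshev's inequality for the lower deviations of an empirical mean. -/
lemma measureReal_pi_sum_le_integral_sub_one [IsProbabilityMeasure μ] {v : Ω → ℝ} {B : ℝ}
    (hm : Measurable v) (hb : ∀ y, |v y| ≤ B) {Q : ℕ} (hQ : 0 < Q) :
    (Measure.pi fun _ : Fin Q => μ).real {y | ∑ i, v (y i) ≤ Q * (∫ z, v z ∂μ - 1)}
      ≤ B ^ 2 / Q := by
  have hL : MemLp v 2 μ := MemLp.of_bound hm.aestronglyMeasurable B (ae_of_all _ hb)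
  have hLi : ∀ i : Fin Q, MemLp (fun y : Fin Q → Ω => v (y i)) 2 (Measure.pi fun _ => μ) :=
    fun i => hL.comp_measurePreserving (measurePreserving_eval (fun _ => μ) i)
  have hQ' : (0 : ℝ) < Q := by exact_mod_cast hQ
  have hvar := ProbabilityTheory.variance_sum_pi (μ := fun _ : Fin Q => μ) (X := fun _ => v)
    fun _ => hL
  have hv1 : ProbabilityTheory.variance v μ ≤ B ^ 2 := by
    refine (ProbabilityTheory.variance_le_expectation_sq hm.aestronglyMeasurable).trans ?_
    have : ∫ z, (v ^ 2) z ∂μ ≤ ∫ _, B ^ 2 ∂μ := by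
      refine integral_mono_of_nonneg (ae_of_all _ fun z => sq_nonneg _) (integrable_const _)
        (ae_of_all _ fun z => ?_)
      change v z ^ 2 ≤ B ^ 2
      rw [← sq_abs]
      exact pow_le_pow_left₀ (abs_nonneg _) (hb z) 2
    simpa using this
  have hLs : MemLp (∑ i : Fin Q, fun y : Fin Q → Ω => v (y i)) 2 (Measure.pi fun _ => μ) :=
    memLp_finsetSum' _ fun i _ => hLi i
  have hmean : ∫ y, (∑ i : Fin Q, fun y : Fin Q → Ω => v (y i)) y ∂(Measure.pi fun _ => μ)
      = Q * ∫ z, v z ∂μ := by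
    simp_rw [Finset.sum_apply]
    rw [integral_finsetSum _ fun i _ => (hLi i).integrable (by norm_num)]
    simp_rw [integral_comp_eval (μ := fun _ : Fin Q => μ) hm.aestronglyMeasurable]
    simp
  have hch := ProbabilityTheory.meas_ge_le_variance_div_sq hLs hQ'
  rw [hvar, hmean] at hch
  refine ENNReal.toReal_le_of_le_ofReal (by positivity) ?_
  refine (measure_mono ?_).trans (hch.trans (ENNReal.ofReal_le_ofReal ?_))
  · intro y hy
    simp only [mem_ofPred_eq, Finset.sum_apply] at hy ⊢
    rw [abs_sub_comm]
    exact le_trans (by linarith) (le_abs_self _)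
  · rw [Finset.sum_const, Finset.card_univ, Fintype.card_fin, nsmul_eq_mul,
      div_le_div_iff₀ (by positivity) hQ']
    nlinarith [mul_le_mul_of_nonneg_left hv1 (sq_nonneg (Q : ℝ))]

/-- The measure of a union of product cells, intersected with a cube. -/
lemma measureReal_pi_cells [IsProbabilityMeasure μ] {κ : Type*}
    {c : Ω → κ} (hc : ∀ k, MeasurableSet (c ⁻¹' {k})) {Q : ℕ} (G : Finset (Fin Q → κ)) {Y : Set Ω}
    (hY : MeasurableSet Y) :
    (Measure.pi fun _ : Fin Q => μ).real {y | (fun i => c (y i)) ∈ G ∧ ∀ i, y i ∈ Y}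
      = ∑ k ∈ G, ∏ i, μ.real (c ⁻¹' {k i} ∩ Y) := by
  have e : {y : Fin Q → Ω | (fun i => c (y i)) ∈ G ∧ ∀ i, y i ∈ Y}
      = ⋃ k ∈ G, Set.pi univ fun i => c ⁻¹' {k i} ∩ Y := by
    ext y
    simp only [mem_ofPred_eq, mem_iUnion, Set.mem_pi, mem_univ, true_implies, mem_inter_iff,
      mem_preimage, mem_singleton_iff, exists_prop]
    constructor
    · rintro ⟨h1, h2⟩
      exact ⟨_, h1, fun i => ⟨rfl, h2 i⟩⟩
    · rintro ⟨k, hk, h2⟩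
      have : (fun i => c (y i)) = k := funext fun i => (h2 i).1
      exact ⟨this ▸ hk, fun i => (h2 i).2⟩
  rw [e, measureReal_biUnion_finset]
  · refine Finset.sum_congr rfl fun k _ => ?_
    rw [measureReal_def, Measure.pi_pi, ENNReal.toReal_prod]
    rfl
  · intro k _ l _ hkl
    refine Set.disjoint_left.mpr fun y h1 h2 => hkl (funext fun i => ?_)
    have h3 := (h1 i (mem_univ _)).1
    have h4 := (h2 i (mem_univ _)).1
    simp only [mem_preimage, mem_singleton_iff] at h3 h4
    rw [← h3, ← h4]
  · exact fun k _ => MeasurableSet.univ_pi fun i => (hc _).inter hY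

/-- If `h` is bounded, has small means over all cells of a partition and large `L¹` norm, then
the event `∑ h(y_i) ≥ Q(A/2 - 5)` is nearly independent of any function that is almost constant
on products of cells. -/
lemma measureReal_alignment [IsProbabilityMeasure μ] {h : Ω → ℝ} {A B : ℝ}
    (hm : Measurable h) (hB : 1 ≤ B) (hb : ∀ y, |h y| ≤ B) (hA : A ≤ ∫ y, |h y| ∂μ)
    {κ : Type*} [Fintype κ] {c : Ω → κ} (hc : ∀ k, MeasurableSet (c ⁻¹' {k}))
    (hw : ∀ k, |∫ y in c ⁻¹' {k}, h y ∂μ| ≤ 1 / 2 * μ.real (c ⁻¹' {k})) {Q : ℕ} (hQ : 0 < Q)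
    {g : (Fin Q → Ω) → ℝ} (hg : ∀ y z, (∀ i, c (y i) = c (z i)) → |g y - g z| ≤ 1 / 4)
    {Z W : Set (Fin Q → Ω)} (hZ : ∀ y, Q * (A / 2 - 5) ≤ ∑ i, h (y i) → 1 / 4 ≤ g y → y ∈ Z)
    (hW : ∀ y, g y ≤ 3 / 4 → y ∈ W) :
    (1 / (4 * B)) ^ Q * (1 - B ^ 2 / Q - (Measure.pi fun _ : Fin Q => μ).real W)
      ≤ (Measure.pi fun _ : Fin Q => μ).real Z := by
  classical
  set ν := Measure.pi fun _ : Fin Q => μ with hν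
  have hQ' : (0 : ℝ) < Q := by exact_mod_cast hQ
  have hi : Integrable h μ := integrable_of_abs_le hm hb
  have hpi : Integrable (fun y => max (h y) 0) μ := hi.pos_part
  set b : κ → ℝ := fun k => (∫ y in c ⁻¹' {k}, max (h y) 0 ∂μ) / μ.real (c ⁻¹' {k}) with hbdef
  have hp0 : ∀ k, 0 ≤ ∫ y in c ⁻¹' {k}, max (h y) 0 ∂μ := fun k =>
    integral_nonneg fun y => le_max_right _ _
  have hpB : ∀ k, ∫ y in c ⁻¹' {k}, max (h y) 0 ∂μ ≤ B * μ.real (c ⁻¹' {k}) := fun k => by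
    have : ∫ y in c ⁻¹' {k}, max (h y) 0 ∂μ ≤ ∫ y in c ⁻¹' {k}, B ∂μ :=
      integral_mono hpi.integrableOn (integrable_const _).integrableOn fun y =>
        max_le ((le_abs_self _).trans (hb y)) (by linarith)
    rwa [setIntegral_const, smul_eq_mul, mul_comm] at this
  have hbmul : ∀ k, b k * μ.real (c ⁻¹' {k}) = ∫ y in c ⁻¹' {k}, max (h y) 0 ∂μ := fun k => by
    by_cases h0 : μ.real (c ⁻¹' {k}) = 0
    · have h1 := hpB k
      rw [h0, mul_zero] at h1 ⊢
      exact le_antisymm (hp0 k) h1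
    · exact div_mul_cancel₀ _ h0
  have hb0 : ∀ k, 0 ≤ b k := fun k => div_nonneg (hp0 k) measureReal_nonneg
  have hbB : ∀ k, b k ≤ B := fun k => div_le_of_le_mul₀ measureReal_nonneg (by linarith) (hpB k)
  have hsplit : ∀ f : Ω → ℝ, Integrable f μ → ∫ y, f y ∂μ = ∑ k, ∫ y in c ⁻¹' {k}, f y ∂μ := by
    intro f hf
    have hu : (⋃ k, c ⁻¹' {k}) = univ := by
      ext y
      simp
    rw [← setIntegral_univ, ← hu]
    refine integral_iUnion_fintype hc ?_ fun k => hf.integrableOn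
    intro k l hkl
    refine Set.disjoint_left.mpr fun y h1 h2 => hkl ?_
    simp only [mem_preimage, mem_singleton_iff] at h1 h2
    rw [← h1, ← h2]
  have hcm : Measurable fun y => b (c y) := by
    let _ : MeasurableSpace κ := ⊤
    exact (measurable_from_top (f := b)).comp (measurable_to_countable' hc)
  have hbint : ∫ y, b (c y) ∂μ = ∫ y, max (h y) 0 ∂μ := by
    rw [hsplit _ hpi, hsplit _ (integrable_of_abs_le (C := B) hcm fun y => by
      rw [abs_of_nonneg (hb0 _)]; exact hbB _)]
    refine Finset.sum_congr rfl fun k _ => ?_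
    rw [← hbmul k, setIntegral_congr_fun (g := fun _ => b k) (hc k) (fun y hy => by
      simp only [mem_preimage, mem_singleton_iff] at hy
      simp only [hy]), setIntegral_const, smul_eq_mul, mul_comm]
  have hsum1 : ∑ k, μ.real (c ⁻¹' {k}) = 1 := by
    have := hsplit (fun _ => (1 : ℝ)) (integrable_const _)
    simpa using this.symm
  have hmean : |∫ y, h y ∂μ| ≤ 1 / 2 := by
    rw [hsplit h hi]
    refine (Finset.abs_sum_le_sum_abs _ _).trans ((Finset.sum_le_sum fun k _ => hw k).trans ?_)
    rw [← Finset.mul_sum, hsum1, mul_one]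
  have hbA : A / 2 - 1 / 4 ≤ ∫ y, b (c y) ∂μ := by
    have e : ∫ y, |h y| ∂μ = 2 * ∫ y, max (h y) 0 ∂μ - ∫ y, h y ∂μ := by
      rw [← integral_const_mul, ← integral_sub (hpi.const_mul 2) hi]
      congr 1
      ext y
      rcases le_total (h y) 0 with h0 | h0
      · rw [abs_of_nonpos h0, max_eq_right h0]
        ring
      · rw [abs_of_nonneg h0, max_eq_left h0]
        ring
    have := (abs_le.mp hmean).1
    rw [hbint]
    linarith
  have hbad := measureReal_pi_sum_le_integral_sub_one (μ := μ) hcm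
    (fun y => by rw [abs_of_nonneg (hb0 _)]; exact hbB _) hQ
  set G : Finset (Fin Q → κ) := Finset.univ.filter fun k =>
    Q * (A / 2 - 5 / 4) ≤ ∑ i, b (k i) ∧ ∃ y : Fin Q → Ω, (∀ i, c (y i) = k i) ∧ 3 / 4 < g y
    with hG
  set Y : Set Ω := {y | b (c y) - 3 ≤ h y} with hYdef
  have hYm : MeasurableSet Y := measurableSet_le (hcm.sub measurable_const) hm
  have hcover : 1 ≤ ν.real {y | (fun i => c (y i)) ∈ G ∧ ∀ i, y i ∈ (univ : Set Ω)} + ν.real W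
      + B ^ 2 / Q := by
    have hsub : (univ : Set (Fin Q → Ω)) ⊆
        ({y | (fun i => c (y i)) ∈ G ∧ ∀ i, y i ∈ (univ : Set Ω)} ∪ W) ∪
          {y | ∑ i, b (c (y i)) ≤ Q * (∫ z, b (c z) ∂μ - 1)} := by
      intro y _
      by_contra! hy
      simp only [mem_union, mem_ofPred_eq, not_or, not_le, mem_univ, implies_true, and_true] at hy
      obtain ⟨⟨h1, h2⟩, h3⟩ := hy
      refine h1 ?_
      rw [hG, Finset.mem_filter]
      refine ⟨Finset.mem_univ _, ?_, y, fun _ => rfl, ?_⟩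
      · refine le_trans ?_ h3.le
        exact mul_le_mul_of_nonneg_left (by linarith) hQ'.le
      · by_contra! h4
        exact h2 (hW y h4)
    have h1 : ν.real univ ≤ _ := measureReal_mono hsub (measure_ne_top _ _)
    rw [probReal_univ] at h1
    have h2 := measureReal_union_le (μ := ν)
      ({y | (fun i => c (y i)) ∈ G ∧ ∀ i, y i ∈ (univ : Set Ω)} ∪ W)
      {y | ∑ i, b (c (y i)) ≤ Q * (∫ z, b (c z) ∂μ - 1)}
    have h3 := measureReal_union_le (μ := ν)
      {y | (fun i => c (y i)) ∈ G ∧ ∀ i, y i ∈ (univ : Set Ω)} W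
    linarith
  have hZsub : {y | (fun i => c (y i)) ∈ G ∧ ∀ i, y i ∈ Y} ⊆ Z := by
    rintro y ⟨hyG, hyY⟩
    rw [hG, Finset.mem_filter] at hyG
    obtain ⟨-, h1, z, hz, hgz⟩ := hyG
    have h2 := (abs_le.mp (hg y z fun i => (hz i).symm)).1
    refine hZ y ?_ (by linarith)
    have h3 : ∑ i, (b (c (y i)) - 3) ≤ ∑ i, h (y i) := Finset.sum_le_sum fun i _ => hyY i
    rw [Finset.sum_sub_distrib, Finset.sum_const, Finset.card_univ, Fintype.card_fin,
      nsmul_eq_mul] at h3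
    nlinarith
  have hbox : (1 / (4 * B)) ^ Q *
      ν.real {y | (fun i => c (y i)) ∈ G ∧ ∀ i, y i ∈ (univ : Set Ω)} ≤
      ν.real {y | (fun i => c (y i)) ∈ G ∧ ∀ i, y i ∈ Y} := by
    rw [measureReal_pi_cells hc G MeasurableSet.univ, measureReal_pi_cells hc G hYm,
      Finset.mul_sum]
    refine Finset.sum_le_sum fun k _ => ?_
    have e : (1 / (4 * B)) ^ Q = ∏ _i : Fin Q, 1 / (4 * B) := by simp
    rw [e, ← Finset.prod_mul_distrib]
    refine Finset.prod_le_prod (fun i _ => by positivity) fun i _ => ?_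
    rw [inter_univ]
    have e2 : c ⁻¹' {k i} ∩ Y = c ⁻¹' {k i} ∩ {y | b (k i) - 3 ≤ h y} := by
      ext y
      simp only [mem_inter_iff, mem_preimage, mem_singleton_iff, hYdef, mem_ofPred_eq,
        and_congr_right_iff]
      intro hy
      rw [hy]
    rw [e2]
    exact measureReal_inter_ge_of_abs_setIntegral_le hm hB hb (hw _) (hbmul _)
  have hZ' : ν.real {y | (fun i => c (y i)) ∈ G ∧ ∀ i, y i ∈ Y} ≤ ν.real Z :=
    measureReal_mono hZsub (measure_ne_top _ _)
  refine le_trans ?_ (hbox.trans hZ')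
  exact mul_le_mul_of_nonneg_left (by linarith) (by positivity)

end Alignment

section Sections

variable {α β : Type*} [MeasurableSpace α] [MeasurableSpace β]

lemma measurable_measureReal_section (ν : Measure β) [IsProbabilityMeasure ν] {S : Set (α × β)}
    (hS : MeasurableSet S) : Measurable fun x => ν.real (Prod.mk x ⁻¹' S) :=
  (measurable_measure_prodMk_left hS).ennreal_toReal

lemma integrable_measureReal_section (μ : Measure α) (ν : Measure β) [IsProbabilityMeasure μ]
    [IsProbabilityMeasure ν] {S : Set (α × β)} (hS : MeasurableSet S) :
    Integrable (fun x => ν.real (Prod.mk x ⁻¹' S)) μ :=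
  integrable_of_abs_le (C := 1) (measurable_measureReal_section ν hS) fun x => by
    rw [abs_of_nonneg measureReal_nonneg]
    exact measureReal_le_one

lemma integral_measureReal_section (μ : Measure α) (ν : Measure β) [IsProbabilityMeasure μ]
    [IsProbabilityMeasure ν] {S : Set (α × β)} (hS : MeasurableSet S) :
    ∫ x, ν.real (Prod.mk x ⁻¹' S) ∂μ = (μ.prod ν).real S := by
  rw [measureReal_def, Measure.prod_apply hS]
  exact integral_toReal (measurable_measure_prodMk_left hS).aemeasurable
    (ae_of_all _ fun x => measure_lt_top _ _)

end Sections

/-- The unit interval is cut into finitely many measurable cells of small diameter. -/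
lemma exists_unitInterval_cells {r : ℝ} (hr : 0 < r) :
    ∃ (R : ℕ) (c : unitInterval → Fin R), (∀ k, MeasurableSet (c ⁻¹' {k})) ∧
      ∀ x y, c x = c y → dist x y < r := by
  obtain ⟨R, hR⟩ := exists_nat_gt (1 / r)
  have hR0 : (0 : ℝ) < R := (by positivity : 0 < 1 / r).trans hR
  have hlt : ∀ x : unitInterval, ⌊R * (x : ℝ)⌋₊ < R + 1 := fun x => by
    rw [Nat.floor_lt' (by omega)]
    have := x.2.2
    push_cast
    nlinarith
  refine ⟨R + 1, fun x => ⟨⌊R * (x : ℝ)⌋₊, hlt x⟩, fun k => ?_, fun x y hxy => ?_⟩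
  · have : Measurable fun x : unitInterval => ⌊R * (x : ℝ)⌋₊ :=
      Nat.measurable_floor.comp (measurable_const.mul measurable_subtype_coe)
    have e : (fun x : unitInterval => (⟨⌊R * (x : ℝ)⌋₊, hlt x⟩ : Fin (R + 1))) ⁻¹' {k}
        = (fun x : unitInterval => ⌊R * (x : ℝ)⌋₊) ⁻¹' {k.1} := by
      ext x
      simp [Fin.ext_iff]
    rw [e]
    exact this (measurableSet_singleton _)
  · have h1 : ⌊R * (x : ℝ)⌋₊ = ⌊R * (y : ℝ)⌋₊ := by simpa using hxy
    have hx := Nat.floor_le (mul_nonneg hR0.le x.2.1)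
    have hx' := Nat.lt_floor_add_one (R * (x : ℝ))
    have hy := Nat.floor_le (mul_nonneg hR0.le y.2.1)
    have hy' := Nat.lt_floor_add_one (R * (y : ℝ))
    rw [← h1] at hy hy'
    rw [Subtype.dist_eq, Real.dist_eq]
    have h2 : R * |(x : ℝ) - y| < 1 := by
      rw [← abs_of_pos hR0, ← abs_mul, abs_lt]
      constructor <;> nlinarith
    have h3 : 1 < R * r := by
      rwa [div_lt_iff₀ hr] at hR
    nlinarith

/-- The set of pairs (point, configuration) at which some kernel block is large is measurable. -/
lemma IsBddONS.measurableSet_configurations {Ω : Type*} [MeasurableSpace Ω] {μ : Measure Ω} {M : ℝ}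
    {φ : ℕ → Ω → ℝ} (h : IsBddONS μ M φ) {Q : ℕ} (a : ℝ) (J : ℕ) :
    MeasurableSet {z : Ω × (Fin Q → Ω) |
      ∃ m, ∃ j ≤ J, a ≤ ∑ i, kernelBlock φ m j z.1 (z.2 i)} := by
  have e : {z : Ω × (Fin Q → Ω) | ∃ m, ∃ j ≤ J, a ≤ ∑ i, kernelBlock φ m j z.1 (z.2 i)}
      = ⋃ m, ⋃ j ∈ Finset.range (J + 1), {z | a ≤ ∑ i, kernelBlock φ m j z.1 (z.2 i)} := by
    ext z
    simp
  rw [e]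
  refine MeasurableSet.iUnion fun m => Finset.measurableSet_biUnion _ fun j _ =>
    measurableSet_le measurable_const (Finset.measurable_fun_sum _ fun i _ => ?_)
  exact (h.measurable_kernelBlock m j).comp
    (measurable_fst.prodMk ((measurable_pi_apply i).comp measurable_snd))

/-- For a random finite configuration, the averages of kernel blocks are large on a set whose
measure is bounded below. -/
lemma IsBddONS.exists_configurations {M : ℝ} {φ : ℕ → unitInterval → ℝ}
    (h : IsBddONS volume M φ) (A : ℝ) :
    ∃ Q : ℕ, 0 < Q ∧ ∃ J : ℕ, 1 / (4 * M ^ 2) ≤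
      ((volume : Measure unitInterval).prod
        (Measure.pi fun _ : Fin Q => (volume : Measure unitInterval))).real
        {z | ∃ m, ∃ j ≤ J, Q * (A / 2 - 5) ≤ ∑ i, kernelBlock φ m j z.1 (z.2 i)} := by
  have hM := h.pos
  have hM1 := h.one_le
  obtain ⟨J, hJ⟩ := h.exists_lebesgue_large A
  set B : ℝ := M ^ 2 * J + 1 with hBdef
  have hB : 1 ≤ B := by
    have : 0 ≤ M ^ 2 * J := by positivity
    linarith
  obtain ⟨Q, hQB⟩ := exists_nat_gt (4 * B ^ 2)
  have hQ' : (0 : ℝ) < Q := lt_of_le_of_lt (by positivity) hQB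
  have hQ : 0 < Q := by exact_mod_cast hQ'
  refine ⟨Q, hQ, J, ?_⟩
  set μ : Measure unitInterval := volume
  set ν := Measure.pi fun _ : Fin Q => μ with hν
  set Al : Set (unitInterval × (Fin Q → unitInterval)) :=
    {z | ∃ m, ∃ j ≤ J, Q * (A / 2 - 5) ≤ ∑ i, kernelBlock φ m j z.1 (z.2 i)} with hAl
  have hAlm : MeasurableSet Al := h.measurableSet_configurations _ J
  by_contra! hcon
  set δ : ℝ := 1 / (2 * M ^ 2) with hδ
  have hδ0 : 0 < δ := by positivity
  have hδ2 : 1 / (4 * M ^ 2) = δ / 2 := by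
    rw [hδ]
    field_simp
    norm_num
  rw [hδ2] at hcon
  set ε : ℝ := (1 / (4 * B)) ^ Q with hε
  have hε0 : 0 < ε := by positivity
  have hε1 : ε ≤ 1 := pow_le_one₀ (by positivity) (by
    rw [div_le_one (by positivity)]
    linarith)
  obtain ⟨g, -, hgi, hgc, hgint⟩ := Integrable.exists_hasCompactSupport_integral_sub_le
    (μ := μ.prod ν) (f := Alᶜ.indicator fun _ => (1 : ℝ))
    ((integrable_const _).indicator hAlm.compl) (ε := ε * δ / 64) (by positivity)
  set Z : Set (unitInterval × (Fin Q → unitInterval)) :=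
    {z | 1 / 4 ≤ ‖Alᶜ.indicator (fun _ => (1 : ℝ)) z - g z‖} with hZ
  have hZm : MeasurableSet Z := measurableSet_le measurable_const
    (((measurable_const.indicator hAlm.compl).sub hgc.measurable).norm)
  have hZle : 1 / 4 * (μ.prod ν).real Z ≤ ε * δ / 64 :=
    (mul_meas_ge_le_integral_of_nonneg (ae_of_all _ fun z => norm_nonneg _)
      (((integrable_const _).indicator hAlm.compl).sub hgint).norm _).trans hgi
  obtain ⟨r, hr, hgr⟩ := Metric.uniformContinuous_iff.mp
    (CompactSpace.uniformContinuous_of_continuous hgc) (1 / 4) (by norm_num)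
  obtain ⟨R, c, hc, hcr⟩ := exists_unitInterval_cells hr
  have hev : ∀ᶠ m in atTop, ∀ k, ∀ j ≤ J, ∀ x,
      |∫ y in c ⁻¹' {k}, kernelBlock φ m j x y ∂μ| ≤ 1 / 2 * μ.real (c ⁻¹' {k}) := by
    rw [eventually_all]
    intro k
    rcases (measureReal_nonneg (μ := μ) (s := c ⁻¹' {k})).eq_or_lt with h0 | h0
    · refine Eventually.of_forall fun m j _ x => ?_
      rw [Measure.restrict_eq_zero.mpr ((measureReal_eq_zero_iff).mp h0.symm), ← h0]
      simp
    · exact h.eventually_abs_setIntegral_kernelBlock_le (hc k) J (by positivity)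
  obtain ⟨m, hm⟩ := hev.exists
  set X := {x | ∃ j ≤ J, A ≤ ∫ y, |kernelBlock φ m j x y| ∂μ} with hX
  have hXm : MeasurableSet X := h.measurableSet_lebesgue A J m
  have hpt : ∀ x, X.indicator (fun _ => ε * (3 / 4)) x ≤
      ε * ν.real (Prod.mk x ⁻¹' (Al ∪ Z)) + ν.real (Prod.mk x ⁻¹' Z) := by
    intro x
    by_cases hx : x ∈ X
    · rw [indicator_of_mem hx]
      obtain ⟨j, hj, hA⟩ := hx
      have hbd : ∀ y, |kernelBlock φ m j x y| ≤ B := fun y => by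
        refine (h.abs_kernelBlock_le m j x y).trans ?_
        have : (j : ℝ) ≤ J := by exact_mod_cast hj
        nlinarith
      have key := measureReal_alignment (μ := μ) (h := kernelBlock φ m j x)
        ((h.measurable_kernelBlock m j).comp measurable_prodMk_left) hB hbd hA hc
        (fun k => hm k j hj x) hQ (g := fun y => g (x, y)) (Z := Prod.mk x ⁻¹' Z)
        (W := Prod.mk x ⁻¹' (Al ∪ Z)) ?_ ?_ ?_
      · have hBQ : B ^ 2 / Q ≤ 1 / 4 := by
          rw [div_le_iff₀ hQ']
          linarith
        change ε * _ ≤ _ at key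
        nlinarith
      · intro y z hyz
        have hd : dist (x, y) (x, z) < r := by
          rw [Prod.dist_eq, dist_self, max_lt_iff]
          exact ⟨hr, (dist_pi_lt_iff hr).mpr fun i => hcr _ _ (hyz i)⟩
        have := (hgr hd).le
        rwa [Real.dist_eq] at this
      · intro y hy hgy
        have hmem : (x, y) ∈ Al := ⟨m, j, hj, hy⟩
        change 1 / 4 ≤ ‖Alᶜ.indicator (fun _ => (1 : ℝ)) (x, y) - g (x, y)‖
        rw [indicator_of_notMem (by simpa using hmem), zero_sub, norm_neg, Real.norm_eq_abs]
        exact hgy.trans (le_abs_self _)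
      · intro y hgy
        by_cases hmem : (x, y) ∈ Al
        · exact Or.inl hmem
        · right
          change 1 / 4 ≤ ‖Alᶜ.indicator (fun _ => (1 : ℝ)) (x, y) - g (x, y)‖
          rw [indicator_of_mem hmem, Real.norm_eq_abs]
          exact le_trans (by linarith) (le_abs_self _)
    · rw [indicator_of_notMem hx]
      positivity
  have hint := integral_mono ((integrable_const (ε * (3 / 4))).indicator hXm)
    (((integrable_measureReal_section μ ν (hAlm.union hZm)).const_mul ε).add
      (integrable_measureReal_section μ ν hZm)) hpt
  have hint' : μ.real X * (ε * (3 / 4)) ≤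
      ε * (μ.prod ν).real (Al ∪ Z) + (μ.prod ν).real Z := by
    rw [integral_indicator hXm, setIntegral_const, smul_eq_mul] at hint
    refine hint.trans (le_of_eq ?_)
    rw [← integral_measureReal_section μ ν (hAlm.union hZm),
      ← integral_measureReal_section μ ν hZm, ← integral_const_mul, ← integral_add
      ((integrable_measureReal_section μ ν (hAlm.union hZm)).const_mul ε)
      (integrable_measureReal_section μ ν hZm)]
    rfl
  have hU := measureReal_union_le (μ := μ.prod ν) Al Z
  have hXδ : δ ≤ μ.real X := hJ m
  have h1 : δ * (ε * (3 / 4)) ≤ μ.real X * (ε * (3 / 4)) :=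
    mul_le_mul_of_nonneg_right hXδ (by positivity)
  have h2 : ε * (μ.prod ν).real (Al ∪ Z) ≤ ε * (δ / 2 + (μ.prod ν).real Z) :=
    mul_le_mul_of_nonneg_left (by linarith) hε0.le
  have h3 : ε * (μ.prod ν).real Z ≤ (μ.prod ν).real Z :=
    mul_le_of_le_one_left measureReal_nonneg hε1
  have h4 : 0 < ε * δ := by positivity
  nlinarith

/-- The sets of points at which one of the first `N` functions is large. -/
lemma measurableSet_exists_le_abs {Ω : Type*} [MeasurableSpace Ω] {T : ℕ → Ω → ℝ}
    (hT : ∀ m, Measurable (T m)) (a : ℝ) (N : ℕ) :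
    MeasurableSet {x | ∃ m ≤ N, a ≤ |T m x|} := by
  have e : {x | ∃ m ≤ N, a ≤ |T m x|} = ⋃ m ∈ Finset.range (N + 1), {x | a ≤ |T m x|} := by
    ext x
    simp
  rw [e]
  exact Finset.measurableSet_biUnion _ fun m _ => measurableSet_le measurable_const (hT m).abs

instance isProbabilityMeasure_restrict_Icc_zero_one :
    IsProbabilityMeasure (volume.restrict (Icc (0 : ℝ) 1)) :=
  ⟨by simp⟩

lemma IsBddONS.comp_coe {M : ℝ} {φ : ℕ → ℝ → ℝ}
    (h : IsBddONS (volume.restrict (Icc (0 : ℝ) 1)) M φ) :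
    IsBddONS (volume : Measure unitInterval) M fun n x => φ n x where
  meas n := (h.meas n).comp measurable_subtype_coe
  bdd n x := h.bdd n x
  orth n m := by
    rw [← h.orth n m]
    exact unitInterval.measurePreserving_coe.integral_comp
      (MeasurableEmbedding.subtype_coe measurableSet_Icc) (fun x => φ n x * φ m x)

lemma IsBddONS.locallyIntegrable {M : ℝ} {φ : ℕ → ℝ → ℝ} {μ : Measure ℝ}
    (h : IsBddONS μ M φ) (n : ℕ) : LocallyIntegrable (φ n) volume :=
  (locallyIntegrable_const M).mono (h.meas n).aestronglyMeasurable
    (ae_of_all _ fun x => by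
      rw [Real.norm_eq_abs]
      exact (h.bdd n x).trans (le_abs_self M))

lemma IsBddONS.exists_configuration {M : ℝ} {φ : ℕ → ℝ → ℝ}
    (h : IsBddONS (volume.restrict (Icc (0 : ℝ) 1)) M φ) (A : ℝ) :
    ∃ Q : ℕ, 0 < Q ∧ ∃ y : Fin Q → ℝ, (∀ i, y i ∈ Ico (0 : ℝ) 1) ∧
      (∀ i n, HasDerivAt (fun x => ∫ t in (0 : ℝ)..x, φ n t) (φ n (y i)) (y i)) ∧
      ∃ N : ℕ, 1 / (8 * M ^ 2) ≤ (volume.restrict (Icc (0 : ℝ) 1)).real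
        {x | ∃ m ≤ N, A ≤ |∑ n ∈ Finset.range m, (∑ i, φ n (y i)) / Q * φ n x|} := by
  have hM := h.pos
  obtain ⟨Q, hQ, J, hQJ⟩ := h.comp_coe.exists_configurations (2 * (2 * A + 5))
  have hQ' : (0 : ℝ) < Q := by exact_mod_cast hQ
  refine ⟨Q, hQ, ?_⟩
  have hAlm := h.comp_coe.measurableSet_configurations (Q := Q)
    (Q * (2 * (2 * A + 5) / 2 - 5)) J
  set Al := {z : unitInterval × (Fin Q → unitInterval) | ∃ m, ∃ j ≤ J,
    Q * (2 * (2 * A + 5) / 2 - 5) ≤ ∑ i, kernelBlock (fun n (x : unitInterval) => φ n x) m j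
      z.1 (z.2 i)} with hAl
  set ν := Measure.pi fun _ : Fin Q => (volume : Measure unitInterval)
  have hswap : (ν.prod (volume : Measure unitInterval)).real (Prod.swap ⁻¹' Al)
      = ((volume : Measure unitInterval).prod ν).real Al := by
    rw [measureReal_def, measureReal_def,
      Measure.measurePreserving_swap.measure_preimage hAlm.nullMeasurableSet]
  rw [← hswap, ← integral_measureReal_section ν volume (measurable_swap hAlm)] at hQJ
  have hae1 : ∀ᵐ x : ℝ, ∀ n c, HasDerivAt (fun x => ∫ t in c..x, φ n t) (φ n x) x :=
    ae_all_iff.mpr fun n => LocallyIntegrable.ae_hasDerivAt_integral (h.locallyIntegrable n)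
  have hae2 : ∀ᵐ x : ℝ, x ≠ 1 := by simp [ae_iff]
  have hae3 : ∀ᵐ x : unitInterval, (x : ℝ) ≠ 1 ∧
      ∀ n c, HasDerivAt (fun x => ∫ t in c..x, φ n t) (φ n x) (x : ℝ) :=
    unitInterval.measurePreserving_coe.quasiMeasurePreserving.ae
      (ae_restrict_of_ae (hae2.and hae1))
  have hae : ∀ᵐ y ∂ν, ∀ i : Fin Q, ((y i : unitInterval) : ℝ) ≠ 1 ∧
      ∀ n c, HasDerivAt (fun x => ∫ t in c..x, φ n t) (φ n (y i)) (y i : ℝ) :=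
    ae_all_iff.mpr fun i => (measurePreserving_eval (fun _ : Fin Q =>
      (volume : Measure unitInterval)) i).quasiMeasurePreserving.ae hae3
  obtain ⟨y, hy, hyA⟩ := exists_notMem_null_integral_le
    (integrable_measureReal_section ν volume (measurable_swap hAlm)) (ae_iff.mp hae)
  rw [mem_ofPred_eq, not_not] at hy
  refine ⟨fun i => y i, fun i => ⟨(y i).2.1, lt_of_le_of_ne (y i).2.2 (hy i).1⟩,
    fun i n => (hy i).2 n 0, ?_⟩
  set T : ℕ → ℝ → ℝ := fun m x => ∑ n ∈ Finset.range m, (∑ i, φ n (y i)) / Q * φ n x with hT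
  have hTm : ∀ m, Measurable (T m) := fun m =>
    Finset.measurable_fun_sum _ fun n _ => (h.meas n).const_mul _
  have hUm := measurableSet_exists_le_abs hTm A
  set U : ℕ → Set ℝ := fun N => {x | ∃ m ≤ N, A ≤ |T m x|} with hU
  have hmono : Monotone U := fun N N' hN x ⟨m, hm, hx⟩ => ⟨m, hm.trans hN, hx⟩
  have hsub : Prod.mk y ⁻¹' (Prod.swap ⁻¹' Al) ⊆
      (fun x : unitInterval => (x : ℝ)) ⁻¹' ⋃ N, U N := by
    rintro x ⟨m, j, -, hx⟩
    have hd : ∑ i, kernelBlock (fun n (x : unitInterval) => φ n x) m j x (y i)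
        = Q * (T (m + j) x - T m x) := by
      simp only [hT, kernelBlock]
      rw [Finset.sum_range_add, add_sub_cancel_left, Finset.sum_comm, Finset.mul_sum]
      refine Finset.sum_congr rfl fun n _ => ?_
      rw [← Finset.mul_sum]
      field_simp
    change _ ≤ ∑ i, kernelBlock (fun n (x : unitInterval) => φ n x) m j x (y i) at hx
    rw [hd] at hx
    have h1 := le_of_mul_le_mul_left hx hQ'
    rw [mem_preimage, mem_iUnion]
    by_cases h2 : A ≤ |T m x|
    · exact ⟨m, m, le_rfl, h2⟩
    · refine ⟨m + j, m + j, le_rfl, ?_⟩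
      push Not at h2
      have h3 := (abs_lt.mp h2).1
      exact le_trans (by linarith) (le_abs_self _)
  have hbig : 1 / (4 * M ^ 2) ≤ (volume.restrict (Icc (0 : ℝ) 1)).real (⋃ N, U N) := by
    refine (hQJ.trans hyA).trans ?_
    refine (measureReal_mono hsub (measure_ne_top _ _)).trans (le_of_eq ?_)
    rw [measureReal_def, measureReal_def, unitInterval.measurePreserving_coe.measure_preimage
      (MeasurableSet.iUnion hUm).nullMeasurableSet]
  have hlim : Tendsto (fun N => (volume.restrict (Icc (0 : ℝ) 1)).real (U N)) atTop
      (nhds ((volume.restrict (Icc (0 : ℝ) 1)).real (⋃ N, U N))) :=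
    (ENNReal.tendsto_toReal (measure_ne_top _ _)).comp (tendsto_measure_iUnion_atTop hmono)
  have hlt : 1 / (8 * M ^ 2) < (volume.restrict (Icc (0 : ℝ) 1)).real (⋃ N, U N) := by
    refine lt_of_lt_of_le ?_ hbig
    apply one_div_lt_one_div_of_lt <;> nlinarith [sq_pos_of_pos hM]
  obtain ⟨N, hN⟩ := (hlim.eventually (lt_mem_nhds hlt)).exists
  exact ⟨N, hN.le⟩

/-- The union of adjacent intervals of length `h` placed to the right of given points. -/
def rightIntervals {Q : ℕ} (y : Fin Q → ℝ) (h : ℝ) : Set ℝ :=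
  ⋃ i : Fin Q, Ioc (y i + i * h) (y i + (i + 1) * h)

lemma measurableSet_rightIntervals {Q : ℕ} (y : Fin Q → ℝ) (h : ℝ) :
    MeasurableSet (rightIntervals y h) :=
  MeasurableSet.iUnion fun _ => measurableSet_Ioc

lemma volume_rightIntervals_le {Q : ℕ} (y : Fin Q → ℝ) (h : ℝ) :
    volume (rightIntervals y h) ≤ ENNReal.ofReal (Q * h) := by
  refine (measure_iUnion_le _).trans (le_of_eq ?_)
  have e : ∀ i : Fin Q, volume (Ioc (y i + i * h) (y i + (i + 1) * h)) = ENNReal.ofReal h :=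
    fun i => by
      rw [Real.volume_Ioc]
      congr 1
      ring
  simp_rw [e]
  rw [tsum_fintype, Finset.sum_const, Finset.card_univ, Fintype.card_fin, nsmul_eq_mul,
    ENNReal.ofReal_mul (by positivity), ENNReal.ofReal_natCast]

lemma eventually_rightIntervals_subset {Q : ℕ} {y : Fin Q → ℝ} (hy : ∀ i, y i ∈ Ico (0 : ℝ) 1) :
    ∀ᶠ h in nhdsWithin 0 (Ioi (0 : ℝ)), rightIntervals y h ⊆ Icc 0 1 := by
  have h1 : ∀ᶠ h in nhdsWithin 0 (Ioi (0 : ℝ)), ∀ i : Fin Q, y i + (i + 1) * h < 1 := by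
    rw [eventually_all]
    intro i
    refine (Continuous.tendsto' (by fun_prop) 0 (y i) (by simp)).mono_left
      nhdsWithin_le_nhds |>.eventually (gt_mem_nhds (hy i).2)
  filter_upwards [h1, self_mem_nhdsWithin] with h hh h0
  refine iUnion_subset fun i x hx => ⟨?_, hx.2.trans (hh i).le⟩
  have h2 : 0 ≤ (i : ℝ) * h := mul_nonneg (by positivity) (le_of_lt h0)
  have := (hy i).1
  linarith [hx.1]

lemma eventually_pairwise_disjoint_rightIntervals {Q : ℕ} (y : Fin Q → ℝ) :
    ∀ᶠ h in nhdsWithin 0 (Ioi (0 : ℝ)), Pairwise (Function.onFun Disjoint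
      fun i : Fin Q => Ioc (y i + i * h) (y i + (i + 1) * h)) := by
  have h1 : ∀ᶠ h in nhdsWithin 0 (Ioi (0 : ℝ)), ∀ i j : Fin Q, y i < y j →
      y i + (i + 1) * h < y j := by
    simp_rw [eventually_all]
    intro i j hij
    refine (Continuous.tendsto' (by fun_prop) 0 (y i) (by simp)).mono_left
      nhdsWithin_le_nhds |>.eventually (gt_mem_nhds hij)
  filter_upwards [h1, self_mem_nhdsWithin] with h hh h0
  have h0' : 0 < h := h0
  have key : ∀ i j : Fin Q, (y i < y j ∨ y i = y j ∧ i < j) →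
      Disjoint (Ioc (y i + i * h) (y i + (i + 1) * h))
        (Ioc (y j + j * h) (y j + (j + 1) * h)) := by
    intro i j hij
    refine Set.disjoint_left.mpr fun x hx hx' => absurd hx'.1 (not_lt.mpr (hx.2.trans ?_))
    rcases hij with hij | ⟨hij, hlt⟩
    · have h2 : 0 ≤ (j : ℝ) * h := by positivity
      linarith [hh i j hij]
    · have h2 : (i : ℝ) + 1 ≤ j := by exact_mod_cast hlt
      rw [hij]
      linarith [mul_le_mul_of_nonneg_right h2 h0'.le]
  intro i j hij
  rcases lt_trichotomy (y i) (y j) with h2 | h2 | h2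
  · exact key i j (Or.inl h2)
  · rcases lt_or_gt_of_ne hij with h3 | h3
    · exact key i j (Or.inr ⟨h2, h3⟩)
    · exact (key j i (Or.inr ⟨h2.symm, h3⟩)).symm
  · exact (key j i (Or.inl h2)).symm

/-- The means of `f` over small intervals to the right of differentiability points of its
primitive converge to the mean of the values. -/
lemma tendsto_setIntegral_rightIntervals {Q : ℕ} {y : Fin Q → ℝ} {f : ℝ → ℝ}
    (hf : LocallyIntegrable f volume)
    (hd : ∀ i, HasDerivAt (fun x => ∫ t in (0 : ℝ)..x, f t) (f (y i)) (y i)) :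
    Tendsto (fun h => (∫ t in rightIntervals y h, f t) / (Q * h)) (nhdsWithin 0 (Ioi (0 : ℝ)))
      (nhds ((∑ i, f (y i)) / Q)) := by
  have hii : ∀ a b, IntervalIntegrable f volume a b := fun a b =>
    intervalIntegrable_iff.mpr
      ((hf.integrableOn_isCompact isCompact_uIcc).mono_set uIoc_subset_uIcc)
  have h1 : ∀ i : Fin Q, Tendsto (fun h : ℝ => h⁻¹ * ∫ t in (y i + i * h)..(y i + (i + 1) * h), f t)
      (nhdsWithin 0 (Ioi (0 : ℝ))) (nhds (f (y i))) := by
    intro i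
    have hlin : ∀ a : ℝ, HasDerivAt (fun h : ℝ => ∫ t in (0 : ℝ)..(y i + a * h), f t)
        (f (y i) * a) 0 := by
      intro a
      have h2 : HasDerivAt (fun h : ℝ => y i + a * h) a 0 := by
        simpa using ((hasDerivAt_id (0 : ℝ)).const_mul a).const_add (y i)
      refine HasDerivAt.comp (h₂ := fun x => ∫ t in (0 : ℝ)..x, f t) 0 ?_ h2
      simpa using hd i
    have h3 := ((hlin (i + 1)).sub (hlin i)).tendsto_slope_zero_right
    have e : f (y i) * ((i : ℝ) + 1) - f (y i) * i = f (y i) := by ring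
    rw [e] at h3
    refine h3.congr fun h => ?_
    simp only [Pi.sub_apply, zero_add, mul_zero, sub_self, sub_zero, smul_eq_mul]
    rw [intervalIntegral.integral_interval_sub_left (hii _ _) (hii _ _)]
  have h2 := (tendsto_finsetSum Finset.univ fun i _ => h1 i).div_const (Q : ℝ)
  refine h2.congr' ?_
  filter_upwards [eventually_pairwise_disjoint_rightIntervals y, self_mem_nhdsWithin] with h hh h0
  have h0' : 0 < h := h0
  rw [rightIntervals, integral_iUnion_fintype (fun _ => measurableSet_Ioc) hh
    (fun i => (hf.integrableOn_isCompact isCompact_Icc).mono_set Ioc_subset_Icc_self)]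
  rw [← Finset.mul_sum]
  have e : ∀ i : Fin Q, ∫ t in (y i + i * h)..(y i + (i + 1) * h), f t
      = ∫ t in Ioc (y i + i * h) (y i + (i + 1) * h), f t := fun i =>
    intervalIntegral.integral_of_le (by linarith [mul_pos h0' one_pos])
  simp_rw [e]
  field_simp

/-- Normalized indicators of arbitrarily small sets have large partial sums of bounded order on
sets whose measure is bounded below. -/
lemma IsBddONS.exists_small_sets {M : ℝ} {φ : ℕ → ℝ → ℝ}
    (h : IsBddONS (volume.restrict (Icc (0 : ℝ) 1)) M φ) (A : ℝ) :
    ∃ N : ℕ, ∃ t₀ > 0, ∀ t, 0 < t → t < t₀ → ∃ E : Set ℝ, MeasurableSet E ∧ E ⊆ Icc 0 1 ∧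
      volume E ≤ ENNReal.ofReal t ∧ 1 / (8 * M ^ 2) ≤ (volume.restrict (Icc (0 : ℝ) 1)).real
        {x | ∃ m ≤ N, A ≤ |∑ n ∈ Finset.range m, (∫ z in E, φ n z) / t * φ n x|} := by
  have hM := h.pos
  obtain ⟨Q, hQ, y, hy, hd, N, hN⟩ := h.exists_configuration (A + 1)
  have hQ' : (0 : ℝ) < Q := by exact_mod_cast hQ
  have hη : (0 : ℝ) < 1 / (M * (N + 1)) := by positivity
  have hclose : ∀ᶠ s in nhdsWithin 0 (Ioi (0 : ℝ)), ∀ n ∈ Finset.range N,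
      |(∫ z in rightIntervals y s, φ n z) / (Q * s) - (∑ i, φ n (y i)) / Q|
        < 1 / (M * (N + 1)) := by
    rw [eventually_all_finset]
    intro n _
    have := (tendsto_setIntegral_rightIntervals (h.locallyIntegrable n) fun i => hd i n).eventually
      (Metric.ball_mem_nhds _ hη)
    simpa [Real.dist_eq] using this
  obtain ⟨u, hu, hus⟩ := mem_nhdsGT_iff_exists_Ioo_subset.mp
    (hclose.and (eventually_rightIntervals_subset hy))
  have hu0 : (0 : ℝ) < u := hu
  refine ⟨N, Q * u, by positivity, fun t ht0 ht => ?_⟩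
  have htu : t / Q ∈ Ioo 0 u := ⟨by positivity, by rwa [div_lt_iff₀ hQ', mul_comm]⟩
  obtain ⟨h1, h2⟩ := hus htu
  have e : Q * (t / Q) = t := by field_simp
  rw [e] at h1
  refine ⟨rightIntervals y (t / Q), measurableSet_rightIntervals _ _, h2, ?_, hN.trans ?_⟩
  · have := volume_rightIntervals_le y (t / Q)
    rwa [e] at this
  · refine measureReal_mono ?_ (measure_ne_top _ _)
    rintro x ⟨m, hm, hx⟩
    refine ⟨m, hm, ?_⟩
    have h3 : |∑ n ∈ Finset.range m, (∑ i, φ n (y i)) / Q * φ n x -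
        ∑ n ∈ Finset.range m, (∫ z in rightIntervals y (t / Q), φ n z) / t * φ n x| ≤ 1 := by
      rw [← Finset.sum_sub_distrib]
      refine (Finset.abs_sum_le_sum_abs _ _).trans ?_
      calc _ ≤ ∑ n ∈ Finset.range m, 1 / (M * (N + 1)) * M := by
            refine Finset.sum_le_sum fun n hn => ?_
            rw [← sub_mul, abs_mul, abs_sub_comm]
            refine mul_le_mul (h1 n ?_).le (h.bdd n x) (abs_nonneg _) hη.le
            simp only [Finset.mem_range] at hn ⊢
            omega
        _ = m / (N + 1) := by
            rw [Finset.sum_const, Finset.card_range, nsmul_eq_mul]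
            field_simp
        _ ≤ 1 := by
            rw [div_le_one (by positivity)]
            have : (m : ℝ) ≤ N := by exact_mod_cast hm
            linarith
    have h4 := abs_sub_abs_le_abs_sub
      (∑ n ∈ Finset.range m, (∑ i, φ n (y i)) / Q * φ n x)
      (∑ n ∈ Finset.range m, (∫ z in rightIntervals y (t / Q), φ n z) / t * φ n x)
    linarith

lemma continuous_cdf (P : Measure ℝ) [IsProbabilityMeasure P] (hP : ∀ a, P {a} = 0) :
    Continuous (ProbabilityTheory.cdf P) := by
  rw [continuous_iff_continuousAt]
  intro a
  rw [(ProbabilityTheory.monotone_cdf P).continuousAt_iff_leftLim_eq_rightLim,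
    StieltjesFunction.rightLim_eq]
  have h := StieltjesFunction.measure_singleton (ProbabilityTheory.cdf P) a
  rw [ProbabilityTheory.measure_cdf, hP a, eq_comm, ENNReal.ofReal_eq_zero] at h
  exact le_antisymm ((ProbabilityTheory.monotone_cdf P).leftLim_le le_rfl) (by linarith)

/-- The distribution function of an atomless law pushes the law to the uniform one. -/
lemma map_cdf (P : Measure ℝ) [IsProbabilityMeasure P] (hP : ∀ a, P {a} = 0) :
    P.map (ProbabilityTheory.cdf P) = volume.restrict (Icc (0 : ℝ) 1) := by
  set F := ProbabilityTheory.cdf P with hF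
  have hc : Continuous F := continuous_cdf P hP
  have hmono : Monotone F := ProbabilityTheory.monotone_cdf P
  have hle1 : ∀ x, F x ≤ 1 := ProbabilityTheory.cdf_le_one P
  have hge0 : ∀ x, 0 ≤ F x := ProbabilityTheory.cdf_nonneg P
  have : IsProbabilityMeasure (P.map F) := Measure.isProbabilityMeasure_map hc.aemeasurable
  refine Measure.ext_of_Iic _ _ fun s => ?_
  rw [Measure.map_apply hc.measurable measurableSet_Iic,
    Measure.restrict_apply measurableSet_Iic]
  rcases lt_or_ge s 0 with hs0 | hs0
  · have e1 : F ⁻¹' Iic s = ∅ := by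
      ext x
      simpa using hs0.trans_le (hge0 x)
    have e2 : Iic s ∩ Icc (0 : ℝ) 1 = ∅ := by
      ext x
      simp only [mem_inter_iff, mem_Iic, mem_Icc, mem_empty_iff_false, iff_false]
      rintro ⟨h1, h2, -⟩
      linarith
    simp [e1, e2]
  rcases le_or_gt 1 s with hs1 | hs1
  · have e1 : F ⁻¹' Iic s = univ := by
      ext x
      simpa using (hle1 x).trans hs1
    have e2 : Iic s ∩ Icc (0 : ℝ) 1 = Icc 0 1 :=
      inter_eq_right.mpr fun x hx => hx.2.trans hs1
    simp [e1, e2]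
  have e2 : Iic s ∩ Icc (0 : ℝ) 1 = Icc 0 s := by
    ext x
    simp only [mem_inter_iff, mem_Iic, mem_Icc]
    constructor
    · rintro ⟨h1, h2, -⟩
      exact ⟨h2, h1⟩
    · rintro ⟨h1, h2⟩
      exact ⟨h2, h1, by linarith⟩
  rw [e2, Real.volume_Icc, sub_zero]
  obtain ⟨b, hb⟩ : ∃ b, s < F b :=
    ((ProbabilityTheory.tendsto_cdf_atTop P).eventually (lt_mem_nhds hs1)).exists
  refine le_antisymm ?_ ?_
  · rcases (F ⁻¹' Iic s).eq_empty_or_nonempty with h0 | h0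
    · simp [h0]
    · have hbdd : BddAbove (F ⁻¹' Iic s) := by
        refine ⟨b, fun x hx => ?_⟩
        by_contra! hbx
        exact absurd (hmono hbx.le) (not_le.mpr (lt_of_le_of_lt hx hb))
      have hmem := (isClosed_Iic.preimage hc).csSup_mem h0 hbdd
      calc P (F ⁻¹' Iic s) ≤ P (Iic (sSup (F ⁻¹' Iic s))) :=
            measure_mono fun x hx => le_csSup hbdd hx
        _ = ENNReal.ofReal (F (sSup (F ⁻¹' Iic s))) := (ProbabilityTheory.ofReal_cdf P _).symm
        _ ≤ ENNReal.ofReal s := ENNReal.ofReal_le_ofReal hmem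
  · rcases hs0.eq_or_lt with h0 | h0
    · simp [← h0]
    · obtain ⟨a, ha⟩ := mem_range_of_exists_le_of_exists_ge hc
        (((ProbabilityTheory.tendsto_cdf_atBot P).eventually (gt_mem_nhds h0)).exists.imp
          fun _ h => le_of_lt h) ⟨b, hb.le⟩
      rw [← ha, ProbabilityTheory.ofReal_cdf]
      exact measure_mono fun x hx => ha ▸ hmono hx

/-- There is a measure preserving transformation of `[0,1]` which is small on each member of a
decreasing sequence of sets with measures tending to zero. -/
lemma exists_measurePreserving_le {F : ℕ → Set ℝ} (hF : ∀ k, MeasurableSet (F k))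
    (hanti : Antitone F) {t : ℕ → ℝ} (ht0 : ∀ k, 0 ≤ t k) (hFt : ∀ k, volume (F k) ≤ ENNReal.ofReal (t k))
    (ht : Tendsto t atTop (nhds 0)) :
    ∃ ω : ℝ → ℝ, MapsTo ω (Icc 0 1) (Icc 0 1) ∧
      MeasurePreserving ω (volume.restrict (Icc (0 : ℝ) 1)) (volume.restrict (Icc (0 : ℝ) 1)) ∧
      ∀ᵐ x ∂(volume.restrict (Icc (0 : ℝ) 1)), ∀ k, x ∈ F k → ω x ≤ t k := by
  classical
  set lam := volume.restrict (Icc (0 : ℝ) 1) with hlam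
  set Z := ⋂ k, F k with hZ
  have hZm : MeasurableSet Z := MeasurableSet.iInter hF
  have hZ0 : volume Z = 0 := by
    refine le_antisymm (ge_of_tendsto' (f := fun k => ENNReal.ofReal (t k)) (x := atTop) ?_
      fun k => (measure_mono (iInter_subset F k)).trans (hFt k)) zero_le
    simpa using ENNReal.tendsto_ofReal ht
  have hex : ∀ x, ∃ k, x ∉ F k \ Z := fun x => by
    by_cases hx : x ∈ Z
    · exact ⟨0, fun h => h.2 hx⟩
    · obtain ⟨k, hk⟩ := not_forall.mp (mt mem_iInter.mpr hx)
      exact ⟨k, fun h => hk h.1⟩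
  set K : ℝ → ℕ := fun x => Nat.find (hex x) with hK
  have hKm : Measurable K := measurable_find hex fun k => ((hF k).diff hZm).compl
  have hKlt : ∀ x k, k < K x ↔ x ∈ F k \ Z := by
    intro x k
    constructor
    · intro h
      exact not_not.mp (Nat.find_min (hex x) h)
    · intro h
      by_contra! hle
      exact Nat.find_spec (hex x) ⟨hanti hle h.1, h.2⟩
  set τ : ℝ → ℝ := fun x => x - K x with hτ
  have hτm : Measurable τ := measurable_id.sub (measurable_from_top.comp hKm)
  set P := lam.map τ with hP
  have : IsProbabilityMeasure P := Measure.isProbabilityMeasure_map hτm.aemeasurable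
  have hatom : ∀ a, P {a} = 0 := by
    intro a
    rw [hP, Measure.map_apply hτm (measurableSet_singleton a)]
    have hsub : τ ⁻¹' {a} ⊆ range fun n : ℕ => a + n := by
      intro x hx
      refine ⟨K x, ?_⟩
      have h1 : x - K x = a := hx
      simp only
      linarith
    exact ((countable_range _).mono hsub).measure_zero lam
  refine ⟨fun x => ProbabilityTheory.cdf P (τ x),
    fun x _ => ⟨ProbabilityTheory.cdf_nonneg P _, ProbabilityTheory.cdf_le_one P _⟩,
    ⟨(continuous_cdf P hatom).measurable.comp hτm, ?_⟩, ?_⟩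
  · have h1 := map_cdf P hatom
    rwa [hP, Measure.map_map (continuous_cdf P hatom).measurable hτm] at h1
  · have hxZ : ∀ᵐ x ∂lam, x ∉ Z := ae_restrict_of_ae (by
      rw [ae_iff]
      simpa using hZ0)
    filter_upwards [hxZ, ae_restrict_mem measurableSet_Icc] with x hx hx01 k hxk
    have h1 : k < K x := (hKlt x k).mpr ⟨hxk, hx⟩
    rw [← ENNReal.ofReal_le_ofReal_iff (ht0 k), ProbabilityTheory.ofReal_cdf, hP,
      Measure.map_apply hτm measurableSet_Iic, hlam, Measure.restrict_apply
      (hτm measurableSet_Iic)]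
    have hsub : τ ⁻¹' Iic (τ x) ∩ Icc 0 1 ⊆ F k ∪ {0} := by
      rintro z ⟨hz, hz01⟩
      have h2 : z - K z ≤ x - K x := hz
      by_cases hz0 : z = 0
      · exact Or.inr hz0
      · left
        refine ((hKlt z k).mp ?_).1
        have h3 : 0 < z := lt_of_le_of_ne hz01.1 (Ne.symm hz0)
        have h4 : (k : ℝ) + 1 ≤ K x := by exact_mod_cast h1
        have h5 : (k : ℝ) < K z := by linarith [hx01.2]
        exact_mod_cast h5
    calc volume (τ ⁻¹' Iic (τ x) ∩ Icc 0 1) ≤ volume (F k ∪ {0}) := measure_mono hsub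
      _ ≤ volume (F k) + volume {(0 : ℝ)} := measure_union_le _ _
      _ ≤ ENNReal.ofReal (t k) := by simpa using hFt k

/-- A uniform boundedness principle: if a sequence of linear operators with values in bounded
functions is not equibounded in measure on the unit ball, then it is pointwise unbounded on a set
of positive measure for some element. -/
lemma exists_unbounded_on_pos_measure {X Ω : Type*} [NormedAddCommGroup X] [NormedSpace ℝ X]
    [CompleteSpace X] [MeasurableSpace Ω] {μ : Measure Ω} [IsProbabilityMeasure μ]
    {T : ℕ → X → Ω → ℝ} (hTm : ∀ m a, Measurable (T m a))
    (hlin : ∀ m a b (c : ℝ) x, T m (a + c • b) x = T m a x + c * T m b x)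
    {C : ℕ → ℝ} (hC : ∀ m a x, |T m a x| ≤ C m * ‖a‖) {δ : ℝ} (hδ : 0 < δ)
    (hbig : ∀ A : ℝ, ∃ e : X, ‖e‖ ≤ 1 ∧ ∃ N : ℕ, δ ≤ μ.real {x | ∃ m ≤ N, A < |T m e x|}) :
    ∃ a, 0 < μ {x | ∀ B : ℝ, ∃ m, B < |T m a x|} := by
  by_contra! hcon
  have hnull : ∀ a, μ {x | ∀ B : ℝ, ∃ m, B < |T m a x|} = 0 := fun a =>
    le_antisymm (hcon a) zero_le
  have hSm : ∀ a (j : ℝ), MeasurableSet {x | ∃ m, j < |T m a x|} := fun a j => by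
    have e : {x | ∃ m, j < |T m a x|} = ⋃ m, {x | j < |T m a x|} := by
      ext x
      simp
    rw [e]
    exact MeasurableSet.iUnion fun m => measurableSet_lt measurable_const (hTm m a).abs
  set V : ℕ → Set X := fun j => {a | ∀ N : ℕ, μ.real {x | ∃ m ≤ N, (j : ℝ) < |T m a x|} ≤ δ / 4}
    with hV
  have hclosed : ∀ j, IsClosed (V j) := by
    intro j
    have e : V j = ⋂ N : ℕ, {a | μ.real {x | ∃ m ≤ N, (j : ℝ) < |T m a x|} ≤ δ / 4} := by
      ext a
      simp [hV]
    rw [e]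
    refine isClosed_iInter fun N => ?_
    rw [← isOpen_compl_iff, Metric.isOpen_iff]
    intro a ha
    have ha' : δ / 4 < μ.real {x | ∃ m ≤ N, (j : ℝ) < |T m a x|} := not_le.mp ha
    set U : ℕ → Set Ω := fun i => {x | ∃ m ≤ N, (j : ℝ) + 1 / (i + 1) < |T m a x|} with hU
    have hUmono : Monotone U := by
      rintro i i' hi x ⟨m, hm, hx⟩
      refine ⟨m, hm, lt_of_le_of_lt ?_ hx⟩
      have := Nat.one_div_le_one_div (α := ℝ) hi
      linarith
    have hUU : {x | ∃ m ≤ N, (j : ℝ) < |T m a x|} = ⋃ i, U i := by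
      ext x
      rw [mem_iUnion]
      constructor
      · rintro ⟨m, hm, hx⟩
        obtain ⟨i, hi⟩ := exists_nat_one_div_lt (sub_pos.mpr hx)
        exact ⟨i, m, hm, by linarith⟩
      · rintro ⟨i, m, hm, hx⟩
        have : (0 : ℝ) < 1 / (i + 1) := by positivity
        exact ⟨m, hm, by linarith⟩
    have hlim : Tendsto (fun i => μ.real (U i)) atTop (nhds (μ.real (⋃ i, U i))) :=
      (ENNReal.tendsto_toReal (measure_ne_top _ _)).comp (tendsto_measure_iUnion_atTop hUmono)
    rw [hUU] at ha'
    obtain ⟨i, hi⟩ := (hlim.eventually (lt_mem_nhds ha')).exists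
    set D : ℝ := ∑ m ∈ Finset.range (N + 1), |C m| + 1 with hD
    have hD0 : 0 < D := by positivity
    refine ⟨1 / ((i + 1) * D), by positivity, fun b hb => not_le.mpr (hi.trans_le ?_)⟩
    refine measureReal_mono ?_ (measure_ne_top _ _)
    rintro x ⟨m, hm, hx⟩
    refine ⟨m, hm, ?_⟩
    have h1 : T m a x = T m b x + 1 * T m (a - b) x := by
      rw [← hlin]
      simp
    have h2 : |T m (a - b) x| ≤ 1 / (i + 1) := by
      refine (hC m _ x).trans ?_
      have h3 : C m ≤ D := by
        refine (le_abs_self _).trans ?_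
        have := Finset.single_le_sum (f := fun m => |C m|) (fun _ _ => abs_nonneg _)
          (Finset.mem_range.mpr (Nat.lt_succ_of_le hm))
        linarith
      have h4 : ‖a - b‖ ≤ 1 / ((i + 1) * D) := by
        rw [← dist_eq_norm, dist_comm]
        exact (Metric.mem_ball.mp hb).le
      calc C m * ‖a - b‖ ≤ D * ‖a - b‖ := mul_le_mul_of_nonneg_right h3 (norm_nonneg _)
        _ ≤ D * (1 / ((i + 1) * D)) := mul_le_mul_of_nonneg_left h4 hD0.le
        _ = 1 / (i + 1) := by field_simp
    have h5 := abs_add_le (T m b x) (1 * T m (a - b) x)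
    rw [← h1, one_mul] at h5
    linarith
  have hcover : ⋃ j, V j = univ := by
    refine eq_univ_of_forall fun a => ?_
    rw [mem_iUnion]
    have hanti : Antitone fun j : ℕ => {x | ∃ m, (j : ℝ) < |T m a x|} := by
      rintro j j' hj x ⟨m, hx⟩
      exact ⟨m, lt_of_le_of_lt (by exact_mod_cast hj) hx⟩
    have hlim := tendsto_measure_iInter_atTop (μ := μ)
      (fun j : ℕ => (hSm a j).nullMeasurableSet) hanti ⟨0, measure_ne_top _ _⟩
    have h0 : μ (⋂ j : ℕ, {x | ∃ m, (j : ℝ) < |T m a x|}) = 0 := by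
      refine measure_mono_null ?_ (hnull a)
      intro x hx B
      obtain ⟨j, hj⟩ := exists_nat_gt B
      obtain ⟨m, hm⟩ := mem_iInter.mp hx j
      exact ⟨m, hj.trans hm⟩
    rw [h0] at hlim
    have hlim' : Tendsto (fun j : ℕ => μ.real {x | ∃ m, (j : ℝ) < |T m a x|}) atTop (nhds 0) :=
      (ENNReal.tendsto_toReal ENNReal.zero_ne_top).comp hlim
    obtain ⟨j, hj⟩ := (hlim'.eventually (gt_mem_nhds (show 0 < δ / 4 by positivity))).exists
    refine ⟨j, fun N => (measureReal_mono ?_ (measure_ne_top _ _)).trans hj.le⟩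
    rintro x ⟨m, -, hx⟩
    exact ⟨m, hx⟩
  obtain ⟨j, a, ha⟩ := nonempty_interior_of_iUnion_of_closed hclosed hcover
  obtain ⟨r, hr, hball⟩ := Metric.isOpen_iff.mp isOpen_interior a ha
  obtain ⟨e, he, N, hN⟩ := hbig (4 * j / r)
  have haV : a ∈ V j := interior_subset ha
  have hbV : a + (r / 2) • e ∈ V j := by
    refine interior_subset (hball ?_)
    rw [Metric.mem_ball, dist_self_add_left, norm_smul, Real.norm_eq_abs,
      abs_of_pos (by positivity)]
    nlinarith
  have hsub : {x | ∃ m ≤ N, 4 * j / r < |T m e x|} ⊆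
      {x | ∃ m ≤ N, (j : ℝ) < |T m a x|} ∪ {x | ∃ m ≤ N, (j : ℝ) < |T m (a + (r / 2) • e) x|} := by
    rintro x ⟨m, hm, hx⟩
    by_contra! hx'
    simp only [mem_union, mem_ofPred_eq, not_or, not_exists, not_and, not_lt] at hx'
    have h1 := hx'.1 m hm
    have h2 := hx'.2 m hm
    rw [hlin] at h2
    have h3 : |r / 2 * T m e x| ≤ 2 * j := by
      have := abs_sub (T m a x + r / 2 * T m e x) (T m a x)
      rw [add_sub_cancel_left] at this
      linarith
    rw [abs_mul, abs_of_pos (by positivity)] at h3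
    rw [div_lt_iff₀ hr] at hx
    nlinarith
  have h1 := measureReal_mono (μ := μ) hsub (measure_ne_top _ _)
  have h2 := measureReal_union_le (μ := μ) {x | ∃ m ≤ N, (j : ℝ) < |T m a x|}
    {x | ∃ m ≤ N, (j : ℝ) < |T m (a + (r / 2) • e) x|}
  have h3 := haV N
  have h4 := hbV N
  linarith

/-- Arbitrarily small elements of a set can be arranged into a rapidly decreasing sequence. -/
lemma exists_rapidly_decreasing_seq {G : Set ℝ} (hG : ∀ b > 0, ∃ t ∈ G, 0 < t ∧ t < b)
    {t₀ : ℕ → ℝ} (ht₀ : ∀ k, 0 < t₀ k) {K : ℕ → ℝ} (hK : ∀ k, 0 ≤ K k) :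
    ∃ t : ℕ → ℝ, (∀ k, t k ∈ G) ∧ (∀ k, 0 < t k) ∧ (∀ k, t k < t₀ k) ∧
      ∀ k, (K k + 1) * t (k + 1) ≤ t k / 2 := by
  choose! g hgG hg0 hgb using hG
  let t : ℕ → ℝ := fun k => Nat.rec (g (t₀ 0))
    (fun k u => g (min (t₀ (k + 1)) (u / (2 * (K k + 1))))) k
  have ht1 : ∀ k, t (k + 1) = g (min (t₀ (k + 1)) (t k / (2 * (K k + 1)))) := fun _ => rfl
  have hpos : ∀ k, 0 < t k := by
    intro k
    induction k with
    | zero => exact hg0 _ (ht₀ 0)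
    | succ k ih =>
      rw [ht1]
      have := hK k
      exact hg0 _ (lt_min (ht₀ _) (by positivity))
  have hb : ∀ k, 0 < min (t₀ (k + 1)) (t k / (2 * (K k + 1))) := fun k =>
    lt_min (ht₀ _) (div_pos (hpos k) (by linarith [hK k]))
  refine ⟨t, fun k => ?_, hpos, fun k => ?_, fun k => ?_⟩
  · cases k with
    | zero => exact hgG _ (ht₀ 0)
    | succ k => exact hgG _ (hb k)
  · cases k with
    | zero => exact hgb _ (ht₀ 0)
    | succ k => exact (hgb _ (hb k)).trans_le (min_le_left _ _)
  · have h1 : t (k + 1) ≤ t k / (2 * (K k + 1)) := (hgb _ (hb k)).le.trans (min_le_right _ _)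
    have h2 : 0 < K k + 1 := by linarith [hK k]
    calc (K k + 1) * t (k + 1) ≤ (K k + 1) * (t k / (2 * (K k + 1))) :=
          mul_le_mul_of_nonneg_left h1 h2.le
      _ = t k / 2 := by field_simp

/-- The function equal to `c k` on `D k` (for disjoint sets `D k`) and to zero elsewhere. -/
noncomputable def stepSum {Ω : Type*} (D : ℕ → Set Ω) (c : ℕ → ℝ) (x : Ω) : ℝ :=
  ∑' k, (D k).indicator (fun _ => c k) x

section StepSum

variable {Ω : Type*} {D : ℕ → Set Ω} {c : ℕ → ℝ}

lemma stepSum_of_mem (hD : Pairwise (Function.onFun Disjoint D)) {k : ℕ} {x : Ω}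
    (hx : x ∈ D k) : stepSum D c x = c k := by
  rw [stepSum, tsum_eq_single k, indicator_of_mem hx]
  intro l hl
  exact indicator_of_notMem (fun hxl => disjoint_left.mp (hD hl) hxl hx) _

lemma stepSum_of_forall_notMem {x : Ω} (hx : ∀ k, x ∉ D k) : stepSum D c x = 0 := by
  simp [stepSum, hx]

lemma hasSum_stepSum (hD : Pairwise (Function.onFun Disjoint D)) (x : Ω) :
    HasSum (fun k => (D k).indicator (fun _ => c k) x) (stepSum D c x) := by
  refine Summable.hasSum ?_
  by_cases hx : ∃ k, x ∈ D k
  · obtain ⟨k, hk⟩ := hx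
    refine summable_of_ne_finset_zero (s := {k}) fun l hl => ?_
    exact indicator_of_notMem (fun hxl => disjoint_left.mp (hD (by simpa using hl)) hxl hk) _
  · push Not at hx
    simp [hx, summable_zero]

lemma measurable_stepSum [MeasurableSpace Ω] (hDm : ∀ k, MeasurableSet (D k))
    (hD : Pairwise (Function.onFun Disjoint D)) : Measurable (stepSum D c) := by
  refine measurable_of_tendsto_metrizable
    (f := fun n x => ∑ k ∈ Finset.range n, (D k).indicator (fun _ => c k) x) (fun n => ?_)
    (tendsto_pi_nhds.mpr fun x => (hasSum_stepSum hD x).tendsto_sum_nat)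
  exact Finset.measurable_fun_sum _ fun k _ => measurable_const.indicator (hDm k)

lemma integral_stepSum_mul [MeasurableSpace Ω] {μ : Measure Ω} [IsFiniteMeasure μ]
    (hDm : ∀ k, MeasurableSet (D k)) (hc : Summable fun k => |c k| * μ.real (D k))
    {g : Ω → ℝ} (hg : Measurable g) {M : ℝ} (hgM : ∀ x, |g x| ≤ M) :
    ∫ x, stepSum D c x * g x ∂μ = ∑' k, c k * ∫ x in D k, g x ∂μ := by
  have hgi : Integrable g μ := integrable_of_abs_le hg hgM
  have hF : ∀ k x, (D k).indicator (fun _ => c k) x * g x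
      = c k * (D k).indicator g x := by
    intro k x
    by_cases hx : x ∈ D k <;> simp [hx]
  have hint : ∀ k, Integrable (fun x => c k * (D k).indicator g x) μ := fun k =>
    (hgi.indicator (hDm k)).const_mul _
  have hnorm : ∀ k, ∫ x, ‖c k * (D k).indicator g x‖ ∂μ ≤ M * (|c k| * μ.real (D k)) := by
    intro k
    have h1 : ∀ x, ‖c k * (D k).indicator g x‖ ≤ (D k).indicator (fun _ => M * |c k|) x := by
      intro x
      by_cases hx : x ∈ D k
      · simp only [hx, indicator_of_mem, norm_mul, Real.norm_eq_abs]
        rw [mul_comm]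
        exact mul_le_mul_of_nonneg_right (hgM x) (abs_nonneg _)
      · simp [hx]
    calc ∫ x, ‖c k * (D k).indicator g x‖ ∂μ
        ≤ ∫ x, (D k).indicator (fun _ => M * |c k|) x ∂μ :=
          integral_mono (hint k).norm ((integrable_const _).indicator (hDm k)) h1
      _ = M * (|c k| * μ.real (D k)) := by
          rw [integral_indicator_const _ (hDm k), smul_eq_mul]
          ring
  have hsum := hasSum_integral_of_summable_integral_norm hint
    (Summable.of_nonneg_of_le (fun k => integral_nonneg fun _ => norm_nonneg _) hnorm
      (hc.mul_left M))
  calc ∫ x, stepSum D c x * g x ∂μ = ∫ x, ∑' k, c k * (D k).indicator g x ∂μ := by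
        refine integral_congr_ae (ae_of_all _ fun x => ?_)
        simp only [← hF]
        rw [tsum_mul_right, stepSum]
    _ = ∑' k, ∫ x, c k * (D k).indicator g x ∂μ := hsum.tsum_eq.symm
    _ = ∑' k, c k * ∫ x in D k, g x ∂μ := by
        refine tsum_congr fun k => ?_
        rw [integral_const_mul, integral_indicator (hDm k)]

lemma lintegral_stepSum_rpow_le [MeasurableSpace Ω] {μ : Measure Ω}
    (hDm : ∀ k, MeasurableSet (D k)) (hD : Pairwise (Function.onFun Disjoint D))
    {s b : ℕ → ℝ} (hs : ∀ k, 0 < s k) (hDs : ∀ k, μ (D k) ≤ ENNReal.ofReal (s k))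
    (hb0 : ∀ k, 0 ≤ b k) (hb : Summable b) {q : Ω → ℝ} {r : ℝ} (hq : ∀ᵐ x ∂μ, q x ≠ 0)
    (hc : ∀ᵐ x ∂μ, ∀ k, x ∈ D k → (|c k| / r) ^ q x ≤ b k / s k) :
    ∫⁻ x, ENNReal.ofReal ((|stepSum D c x| / r) ^ q x) ∂μ ≤ ENNReal.ofReal (∑' k, b k) := by
  calc ∫⁻ x, ENNReal.ofReal ((|stepSum D c x| / r) ^ q x) ∂μ
      ≤ ∫⁻ x, ∑' k, (D k).indicator (fun _ => ENNReal.ofReal (b k / s k)) x ∂μ := by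
        refine lintegral_mono_ae ?_
        filter_upwards [hq, hc] with x hqx hcx
        by_cases hx : ∃ k, x ∈ D k
        · obtain ⟨k, hk⟩ := hx
          rw [stepSum_of_mem hD hk]
          refine le_trans ?_ (ENNReal.le_tsum k)
          rw [indicator_of_mem hk]
          exact ENNReal.ofReal_le_ofReal (hcx k hk)
        · push Not at hx
          simp [stepSum_of_forall_notMem hx, Real.zero_rpow hqx]
    _ = ∑' k, ENNReal.ofReal (b k / s k) * μ (D k) := by
        rw [lintegral_tsum fun k => (measurable_const.indicator (hDm k)).aemeasurable]
        exact tsum_congr fun k => lintegral_indicator_const (hDm k) _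
    _ ≤ ∑' k, ENNReal.ofReal (b k) := by
        refine ENNReal.tsum_le_tsum fun k => ?_
        calc ENNReal.ofReal (b k / s k) * μ (D k)
            ≤ ENNReal.ofReal (b k / s k) * ENNReal.ofReal (s k) := by gcongr; exact hDs k
          _ = ENNReal.ofReal (b k) := by
            rw [← ENNReal.ofReal_mul (div_nonneg (hb0 k) (hs k).le),
              div_mul_cancel₀ _ (hs k).ne']
    _ = ENNReal.ofReal (∑' k, b k) := (ENNReal.ofReal_tsum_of_nonneg hb0 hb).symm

end StepSum

lemma rpow_le_mul_exp {y t q γ C : ℝ} (hy0 : 0 ≤ y) (ht : 0 < t)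
    (hyt : y ≤ Real.exp 1 / t) (hC : 0 ≤ C) (hq1 : 1 ≤ q) (hqγ : q ≤ 1 + γ)
    (hγ : γ * Real.log (Real.exp 1 / t) ≤ C) : y ^ q ≤ y * Real.exp C := by
  have hγ0 : 0 ≤ γ := by linarith
  rcases le_or_gt y 1 with hy | hy
  · calc y ^ q ≤ y ^ (1 : ℝ) := Real.rpow_le_rpow_of_exponent_ge' hy0 hy zero_le_one hq1
      _ = y * 1 := by simp
      _ ≤ y * Real.exp C := mul_le_mul_of_nonneg_left (Real.one_le_exp hC) hy0
  · have hpos : 0 < y := by linarith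
    calc y ^ q ≤ y ^ (1 + γ) := Real.rpow_le_rpow_of_exponent_le hy.le hqγ
      _ = y * y ^ γ := by rw [Real.rpow_add hpos, Real.rpow_one]
      _ ≤ y * (Real.exp 1 / t) ^ γ :=
        mul_le_mul_of_nonneg_left (Real.rpow_le_rpow hy0 hyt hγ0) hy0
      _ = y * Real.exp (γ * Real.log (Real.exp 1 / t)) := by
        rw [Real.rpow_def_of_pos (by positivity), mul_comm (Real.log _)]
      _ ≤ y * Real.exp C := mul_le_mul_of_nonneg_left (Real.exp_le_exp.mpr hγ) hy0

lemma volume_iUnion_le_of_le_half {E : ℕ → Set ℝ} {t : ℕ → ℝ} (ht0 : ∀ k, 0 ≤ t k)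
    (hE : ∀ k, volume (E k) ≤ ENNReal.ofReal (t k / 2)) (ht : ∀ k, t (k + 1) ≤ t k / 2) (k : ℕ) :
    volume (⋃ i, E (k + i)) ≤ ENNReal.ofReal (t k) := by
  have hti : ∀ i, t (k + i) ≤ t k * (1 / 2) ^ i := by
    intro i
    induction i with
    | zero => simp
    | succ i ih =>
      have := ht (k + i)
      rw [← add_assoc, pow_succ]
      linarith
  have hsum : HasSum (fun i : ℕ => t k / 2 * (1 / 2 : ℝ) ^ i) (t k) := by
    have := hasSum_geometric_two.mul_left (t k / 2)
    rwa [div_mul_cancel₀ _ two_ne_zero] at this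
  calc volume (⋃ i, E (k + i)) ≤ ∑' i, volume (E (k + i)) := measure_iUnion_le _
    _ ≤ ∑' i : ℕ, ENNReal.ofReal (t k / 2 * (1 / 2 : ℝ) ^ i) := by
        refine ENNReal.tsum_le_tsum fun i => (hE _).trans (ENNReal.ofReal_le_ofReal ?_)
        have := hti i
        linarith
    _ = ENNReal.ofReal (t k) := by
        rw [← ENNReal.ofReal_tsum_of_nonneg
          (fun i => mul_nonneg (by linarith [ht0 k]) (by positivity)) hsum.summable, hsum.tsum_eq]

lemma IsBddONS.abs_sum_le_of_diff {M : ℝ} {φ : ℕ → ℝ → ℝ}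
    (h : IsBddONS (volume.restrict (Icc (0 : ℝ) 1)) M φ) {E F : Set ℝ}
    (hEI : E ⊆ Icc 0 1) (hF : MeasurableSet F) {u s : ℝ} (hu : 0 ≤ u) (hs : 0 < s)
    (hFu : volume F ≤ ENNReal.ofReal u) (m : ℕ) (x : ℝ) :
    |∑ n ∈ Finset.range m, (∫ z in E, φ n z) / s * φ n x| ≤
      |∑ n ∈ Finset.range m, (∫ z in E \ F, φ n z ∂(volume.restrict (Icc (0 : ℝ) 1))) / s * φ n x|
        + m * M ^ 2 * u / s := by
  have hterm : ∀ n, |(∫ z in E, φ n z) / s * φ n x -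
      (∫ z in E \ F, φ n z ∂(volume.restrict (Icc (0 : ℝ) 1))) / s * φ n x| ≤ M ^ 2 * u / s := by
    intro n
    have hint : IntegrableOn (φ n) E volume := by
      have h1 : IntegrableOn (φ n) (Icc 0 1) volume := integrable_of_abs_le (h.meas n) (h.bdd n)
      exact h1.mono_set hEI
    have hlt : volume (E ∩ F) ≤ ENNReal.ofReal u := (measure_mono inter_subset_right).trans hFu
    have h2 : |∫ z in E ∩ F, φ n z| ≤ M * u := by
      have := norm_setIntegral_le_of_norm_le_const (μ := volume) (s := E ∩ F) (f := φ n) (C := M)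
        (hlt.trans_lt ENNReal.ofReal_lt_top) (fun z _ => h.bdd n z)
      rw [Real.norm_eq_abs] at this
      refine this.trans (mul_le_mul_of_nonneg_left ?_ h.nonneg)
      exact ENNReal.toReal_le_of_le_ofReal hu hlt
    have h3 : (∫ z in E ∩ F, φ n z) + ∫ z in E \ F, φ n z = ∫ z in E, φ n z :=
      integral_inter_add_sdiff hF hint
    rw [Measure.restrict_restrict_of_subset (sdiff_subset.trans hEI), ← h3, ← sub_mul, ← sub_div,
      add_sub_cancel_right, abs_mul, abs_div, abs_of_pos hs]
    calc |∫ z in E ∩ F, φ n z| / s * |φ n x| ≤ M * u / s * M := by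
          have := h.nonneg
          gcongr
          exact h.bdd n x
      _ = M ^ 2 * u / s := by ring
  have hdiff := Finset.abs_sum_le_sum_abs (fun n => (∫ z in E, φ n z) / s * φ n x -
      (∫ z in E \ F, φ n z ∂(volume.restrict (Icc (0 : ℝ) 1))) / s * φ n x) (Finset.range m)
  rw [Finset.sum_sub_distrib] at hdiff
  have hsum := Finset.sum_le_sum fun n (_ : n ∈ Finset.range m) => hterm n
  rw [Finset.sum_const, Finset.card_range, nsmul_eq_mul] at hsum
  have := abs_sub_abs_le_abs_sub (∑ n ∈ Finset.range m, (∫ z in E, φ n z) / s * φ n x)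
    (∑ n ∈ Finset.range m, (∫ z in E \ F, φ n z ∂(volume.restrict (Icc (0 : ℝ) 1))) / s * φ n x)
  have h4 : (m : ℝ) * (M ^ 2 * u / s) = m * M ^ 2 * u / s := by ring
  linarith

/-- Disjoint small sets, at scales taken from `G`, whose normalized indicators have large partial
sums on sets of measure bounded below. -/
lemma IsBddONS.exists_disjoint_small_sets {M : ℝ} {φ : ℕ → ℝ → ℝ}
    (h : IsBddONS (volume.restrict (Icc (0 : ℝ) 1)) M φ) {G : Set ℝ}
    (hG : ∀ b > 0, ∃ t ∈ G, 0 < t ∧ t < b) :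
    ∃ (t : ℕ → ℝ) (D F : ℕ → Set ℝ), (∀ k, t k ∈ G) ∧ (∀ k, 0 < t k) ∧
      Tendsto t atTop (nhds 0) ∧ (∀ k, MeasurableSet (D k)) ∧
      Pairwise (Function.onFun Disjoint D) ∧ (∀ k, volume (D k) ≤ ENNReal.ofReal (t k / 2)) ∧
      (∀ k, MeasurableSet (F k)) ∧ Antitone F ∧ (∀ k, volume (F k) ≤ ENNReal.ofReal (t k)) ∧
      (∀ k, D k ⊆ F k) ∧
      ∀ k : ℕ, ∃ N : ℕ, 1 / (8 * M ^ 2) ≤ (volume.restrict (Icc (0 : ℝ) 1)).real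
        {x | ∃ m ≤ N, (k : ℝ) ≤ |∑ n ∈ Finset.range m,
          (∫ z in D k, φ n z ∂(volume.restrict (Icc (0 : ℝ) 1))) / (t k / 2) * φ n x|} := by
  choose N t₀ ht₀ hE using fun k : ℕ => h.exists_small_sets ((k : ℝ) + 1)
  obtain ⟨t, htG, htpos, htt₀, htK⟩ := exists_rapidly_decreasing_seq hG
    (t₀ := fun k => 2 * t₀ k) (fun k => by linarith [ht₀ k])
    (K := fun k => N k * M ^ 2) (fun k => by positivity)
  choose E hEm hEI hEv hEbig using fun k =>
    hE k (t k / 2) (by linarith [htpos k]) (by linarith [htt₀ k])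
  have hhalf : ∀ k, t (k + 1) ≤ t k / 2 := fun k => by
    have h1 := htK k
    have h2 : 0 ≤ N k * M ^ 2 * t (k + 1) := mul_nonneg (by positivity) (htpos _).le
    linarith
  have hlim : Tendsto t atTop (nhds 0) := by
    have hti : ∀ i, t i ≤ t 0 * (1 / 2) ^ i := by
      intro i
      induction i with
      | zero => simp
      | succ i ih =>
        have := hhalf i
        rw [pow_succ]
        linarith
    refine squeeze_zero (fun k => (htpos k).le) hti ?_
    have := (tendsto_pow_atTop_nhds_zero_of_lt_one (r := (1 / 2 : ℝ)) (by norm_num)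
      (by norm_num)).const_mul (t 0)
    rwa [mul_zero] at this
  have hFv := volume_iUnion_le_of_le_half (fun k => (htpos k).le) hEv hhalf
  have hFm : ∀ k, MeasurableSet (⋃ i, E (k + i)) := fun k => MeasurableSet.iUnion fun _ => hEm _
  have hEF : ∀ k l, k ≤ l → E l ⊆ ⋃ i, E (k + i) := by
    intro k l hkl
    obtain ⟨i, rfl⟩ := Nat.exists_eq_add_of_le hkl
    exact subset_iUnion (fun i => E (k + i)) i
  refine ⟨t, fun k => E k \ ⋃ i, E (k + 1 + i), fun k => ⋃ i, E (k + i), htG, htpos, hlim,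
    fun k => (hEm k).diff (hFm _), ?_, fun k => (measure_mono sdiff_subset).trans (hEv k), hFm,
    ?_, hFv, fun k => sdiff_subset.trans (hEF k k le_rfl), fun k => ⟨N k, (hEbig k).trans ?_⟩⟩
  · refine (pairwise_disjoint_on _).mpr fun k l hkl => ?_
    exact disjoint_sdiff_left.mono_right (sdiff_subset.trans (hEF _ _ hkl))
  · intro k l hkl
    exact iUnion_subset fun i => hEF _ _ (hkl.trans (Nat.le_add_right l i))
  · refine measureReal_mono ?_ (measure_ne_top _ _)
    rintro x ⟨m, hm, hx⟩
    refine ⟨m, hm, ?_⟩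
    have h1 := h.abs_sum_le_of_diff (hEI k) (hFm (k + 1)) (htpos _).le
      (half_pos (htpos k)) (hFv (k + 1)) m x
    have h2 : m * M ^ 2 * t (k + 1) / (t k / 2) ≤ 1 := by
      rw [div_le_one (half_pos (htpos k))]
      have h3 : (m : ℝ) * M ^ 2 ≤ N k * M ^ 2 + 1 := by
        have : (m : ℝ) * M ^ 2 ≤ N k * M ^ 2 := by gcongr
        linarith
      exact (mul_le_mul_of_nonneg_right h3 (htpos _).le).trans (htK k)
    linarith

lemma IsBddONS.exists_summable_divergent {M : ℝ} {Ω : Type*} [MeasurableSpace Ω] {μ : Measure Ω}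
    [IsProbabilityMeasure μ] {φ : ℕ → Ω → ℝ} (h : IsBddONS μ M φ) {d : ℕ → ℕ → ℝ}
    (hd : ∀ n k, |d n k| ≤ M) {δ : ℝ} (hδ : 0 < δ)
    (hbig : ∀ k : ℕ, ∃ N : ℕ, δ ≤ μ.real
      {x | ∃ m ≤ N, (k : ℝ) ≤ |∑ n ∈ Finset.range m, d n k * φ n x|}) :
    ∃ a : ℕ → ℝ, Summable (fun k => |a k|) ∧ 0 < μ {x | ∀ B : ℝ, ∃ m : ℕ,
      B < |∑ n ∈ Finset.range m, (∑' k, a k * d n k) * φ n x|} := by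
  have hsum : ∀ a : lp (fun _ : ℕ => ℝ) 1, Summable fun k => |a k| := fun a => by
    simpa using (lp.memℓp a).summable (by norm_num)
  have hnorm : ∀ a : lp (fun _ : ℕ => ℝ) 1, ‖a‖ = ∑' k, |a k| := fun a => by
    rw [lp.norm_eq_tsum_rpow (by norm_num)]
    simp
  have hle : ∀ (a : lp (fun _ : ℕ => ℝ) 1) n k, ‖a k * d n k‖ ≤ M * |a k| := fun a n k => by
    rw [norm_mul, Real.norm_eq_abs, Real.norm_eq_abs, mul_comm]
    exact mul_le_mul_of_nonneg_right (hd n k) (abs_nonneg _)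
  have hsumd : ∀ (a : lp (fun _ : ℕ => ℝ) 1) n, Summable fun k => a k * d n k := fun a n =>
    Summable.of_norm_bounded ((hsum a).mul_left M) (hle a n)
  have hbdd : ∀ (a : lp (fun _ : ℕ => ℝ) 1) n, |∑' k, a k * d n k| ≤ M * ‖a‖ := fun a n => by
    rw [hnorm, ← tsum_mul_left]
    exact tsum_of_norm_bounded ((hsum a).mul_left M).hasSum (hle a n)
  have key := exists_unbounded_on_pos_measure (X := lp (fun _ : ℕ => ℝ) 1) (μ := μ)
    (T := fun m a x => ∑ n ∈ Finset.range m, (∑' k, a k * d n k) * φ n x)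
    (C := fun m => m * M ^ 2)
    (fun m a => Finset.measurable_fun_sum _ fun n _ => (h.meas n).const_mul _) ?_ ?_ hδ ?_
  · obtain ⟨a, ha⟩ := key
    exact ⟨a, hsum a, ha⟩
  · intro m a b c x
    simp only [Finset.mul_sum, ← Finset.sum_add_distrib]
    refine Finset.sum_congr rfl fun n _ => ?_
    rw [← mul_assoc, ← add_mul, ← tsum_mul_left, ← (hsumd a n).tsum_add ((hsumd b n).mul_left c)]
    congr 1
    refine tsum_congr fun k => ?_
    simp only [lp.coeFn_add, lp.coeFn_smul, Pi.add_apply, Pi.smul_apply, smul_eq_mul]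
    ring
  · intro m a x
    refine (Finset.abs_sum_le_sum_abs _ _).trans ?_
    calc ∑ n ∈ Finset.range m, |(∑' k, a k * d n k) * φ n x|
        ≤ ∑ n ∈ Finset.range m, M * ‖a‖ * M := by
          refine Finset.sum_le_sum fun n _ => ?_
          rw [abs_mul]
          exact mul_le_mul (hbdd a n) (h.bdd n x) (abs_nonneg _)
            (mul_nonneg h.nonneg (norm_nonneg _))
      _ = m * M ^ 2 * ‖a‖ := by
          rw [Finset.sum_const, Finset.card_range, nsmul_eq_mul]
          ring
  · intro A
    obtain ⟨k, hk⟩ := exists_nat_gt A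
    obtain ⟨N, hN⟩ := hbig k
    have h1 : ‖lp.single (E := fun _ : ℕ => ℝ) 1 k (1 : ℝ)‖ ≤ 1 := by
      rw [lp.norm_single (E := fun _ : ℕ => ℝ) (by norm_num) k (1 : ℝ), norm_one]
    refine ⟨lp.single (E := fun _ : ℕ => ℝ) 1 k (1 : ℝ), h1, N,
      hN.trans (measureReal_mono ?_ (measure_ne_top _ _))⟩
    rintro x ⟨m, hm, hx⟩
    refine ⟨m, hm, hk.trans_le (hx.trans_eq ?_)⟩
    congr 1
    refine Finset.sum_congr rfl fun n _ => ?_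
    rw [tsum_eq_single k]
    · simp
    · intro l hl
      simp [hl]

lemma vpNorm_stepSum_lt_top {p ω : ℝ → ℝ} (hp : MonotoneOn p (Icc (0 : ℝ) 1)) (hp0 : p 0 = 1)
    (hω : MapsTo ω (Icc (0 : ℝ) 1) (Icc (0 : ℝ) 1)) {D : ℕ → Set ℝ} {t a : ℕ → ℝ} {C : ℝ}
    (hC : 0 ≤ C) (htpos : ∀ k, 0 < t k) (ht1 : ∀ k, t k ≤ 1)
    (htC : ∀ k, (p (t k) - 1) * Real.log (Real.exp 1 / t k) ≤ C)
    (hDm : ∀ k, MeasurableSet (D k)) (hD : Pairwise (Function.onFun Disjoint D))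
    (hDt : ∀ k, volume (D k) ≤ ENNReal.ofReal (t k / 2))
    (hωt : ∀ᵐ x ∂(volume.restrict (Icc (0 : ℝ) 1)), ∀ k, x ∈ D k → ω x ≤ t k)
    (ha : Summable fun k => |a k|) :
    vpNorm (fun x => p (ω x)) (stepSum D fun k => a k / (t k / 2)) < ⊤ := by
  set L : ℝ := ∑' k, |a k| with hL
  have hL0 : 0 ≤ L := tsum_nonneg fun _ => abs_nonneg _
  have haL : ∀ k, |a k| ≤ L := fun k => ha.le_tsum k fun _ _ => abs_nonneg _
  set r : ℝ := (L + 1) * Real.exp C with hr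
  have hr0 : 0 < r := by positivity
  have hrL : L ≤ r := by
    have := Real.one_le_exp hC
    nlinarith
  have hp1 : ∀ x ∈ Icc (0 : ℝ) 1, 1 ≤ p (ω x) := fun x hx =>
    hp0 ▸ hp ⟨le_rfl, zero_le_one⟩ (hω hx) (hω hx).1
  refine lt_of_le_of_lt (sInf_le ⟨r, hr0, rfl, ?_⟩) ENNReal.ofReal_lt_top
  have hmod := lintegral_stepSum_rpow_le (μ := volume.restrict (Icc (0 : ℝ) 1))
    (c := fun k => a k / (t k / 2)) hDm hD (s := fun k => t k / 2)
    (b := fun k => |a k| / (L + 1)) (fun k => half_pos (htpos k))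
    (fun k => (Measure.restrict_apply_le _ _).trans (hDt k)) (fun k => by positivity)
    (ha.div_const _) (q := fun x => p (ω x)) (r := r) ?_ ?_
  · refine hmod.trans ?_
    rw [tsum_div_const, ← hL, ENNReal.ofReal_le_one]
    exact (div_le_one (by linarith)).mpr (by linarith)
  · filter_upwards [ae_restrict_mem measurableSet_Icc] with x hx
    linarith [hp1 x hx]
  · filter_upwards [ae_restrict_mem measurableSet_Icc, hωt] with x hx hxt k hk
    have htk := htpos k
    have hle : p (ω x) ≤ 1 + (p (t k) - 1) := by
      have := hp (hω hx) ⟨htk.le, ht1 k⟩ (hxt k hk)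
      linarith
    have habs : |a k / (t k / 2)| / r = |a k| / r * (2 / t k) := by
      rw [abs_div, abs_of_pos (half_pos htk)]
      field_simp
    have hbd : |a k| / r * (2 / t k) ≤ Real.exp 1 / t k := by
      have h1 : |a k| / r ≤ 1 := (div_le_one hr0).mpr ((haL k).trans hrL)
      have h2 : (2 : ℝ) ≤ Real.exp 1 := by linarith [Real.add_one_le_exp (1 : ℝ)]
      calc |a k| / r * (2 / t k) ≤ 1 * (2 / t k) :=
            mul_le_mul_of_nonneg_right h1 (by positivity)
        _ ≤ Real.exp 1 / t k := by
            rw [one_mul]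
            gcongr
    refine (rpow_le_mul_exp (by positivity) htk (habs ▸ hbd) hC (hp1 x hx) hle
      (htC k)).trans_eq ?_
    rw [habs, hr]
    have := Real.exp_pos C
    field_simp

lemma IsBddONS.exists_divergent {M : ℝ} {φ : ℕ → ℝ → ℝ}
    (h : IsBddONS (volume.restrict (Icc (0 : ℝ) 1)) M φ) {p : ℝ → ℝ} (hp : MemPln p) :
    ∃ ω : ℝ → ℝ, MeasurePreserving01 ω ∧ ∃ f : ℝ → ℝ, Measurable f ∧
      vpNorm (fun t => p (ω t)) f < ⊤ ∧
      0 < (volume.restrict (Icc (0 : ℝ) 1)) {x | ∀ B : ℝ, ∃ m : ℕ, B < |∑ n ∈ Finset.range m,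
        (∫ z in Icc (0 : ℝ) 1, f z * φ n z) * φ n x|} := by
  obtain ⟨hmono, hp0, -, C, hC⟩ := hp
  have hG : ∀ b > 0, ∃ t ∈ {t : ℝ | t ≤ 1 ∧ (p t - 1) * Real.log (Real.exp 1 / t) ≤ C},
      0 < t ∧ t < b := by
    intro b hb
    obtain ⟨t, htC, ht⟩ := (hC.and_eventually
      (Ioo_mem_nhdsGT (lt_min hb zero_lt_one))).exists
    exact ⟨t, ⟨(ht.2.trans_le (min_le_right _ _)).le, htC⟩, ht.1, ht.2.trans_le (min_le_left _ _)⟩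
  obtain ⟨t, D, F, htG, htpos, hlim, hDm, hD, hDt, hFm, hFanti, hFt, hDF, hbig⟩ :=
    h.exists_disjoint_small_sets hG
  obtain ⟨ω, hωmaps, hωmp, hωt⟩ := exists_measurePreserving_le hFm hFanti
    (fun k => (htpos k).le) hFt hlim
  have hDreal : ∀ k, (volume.restrict (Icc (0 : ℝ) 1)).real (D k) ≤ t k / 2 := fun k =>
    ENNReal.toReal_le_of_le_ofReal (half_pos (htpos k)).le
      ((Measure.restrict_apply_le _ _).trans (hDt k))
  have key := h.exists_summable_divergent
    (d := fun n k => (∫ z in D k, φ n z ∂(volume.restrict (Icc (0 : ℝ) 1))) / (t k / 2))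
    (fun n k => ?_) (by have := h.pos; positivity) hbig
  · obtain ⟨a, ha, hdiv⟩ := key
    refine ⟨ω, ⟨hωmaps, hωmp⟩, stepSum D fun k => a k / (t k / 2), measurable_stepSum hDm hD,
      vpNorm_stepSum_lt_top hmono hp0 hωmaps (le_max_right C 0) htpos (fun k => (htG k).1)
        (fun k => (htG k).2.trans (le_max_left C 0)) hDm hD hDt ?_ ha, ?_⟩
    · filter_upwards [hωt] with x hx k hk using hx k (hDF k hk)
    · have hcoef : ∀ n, ∫ z in Icc (0 : ℝ) 1, stepSum D (fun k => a k / (t k / 2)) z * φ n z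
          = ∑' k, a k *
            ((∫ z in D k, φ n z ∂(volume.restrict (Icc (0 : ℝ) 1))) / (t k / 2)) := by
        intro n
        rw [integral_stepSum_mul hDm (Summable.of_nonneg_of_le (fun k => by positivity)
          (fun k => ?_) ha) (h.meas n) (h.bdd n)]
        · refine tsum_congr fun k => ?_
          ring
        · have htk := half_pos (htpos k)
          rw [abs_div, abs_of_pos htk, div_mul_eq_mul_div, div_le_iff₀ htk]
          exact mul_le_mul_of_nonneg_left (hDreal k) (abs_nonneg _)
      simpa only [hcoef] using hdiv
  · have htk := half_pos (htpos k)
    rw [abs_div, abs_of_pos htk, div_le_iff₀ htk]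
    have := norm_setIntegral_le_of_norm_le_const (μ := volume.restrict (Icc (0 : ℝ) 1))
      (s := D k) (f := φ n) (C := M) (measure_lt_top _ _) (fun z _ => h.bdd n z)
    exact this.trans (mul_le_mul_of_nonneg_left (hDreal k) h.nonneg)

/-- A uniformly bounded orthonormal system, reindexed from `0` and truncated to be bounded
everywhere. -/
lemma isBddONS_clip {φ : ℕ → ℝ → ℝ} {M : ℝ} (hONS : IsONS φ) (hUB : UnifBounded φ M) :
    IsBddONS (volume.restrict (Icc (0 : ℝ) 1)) M
        (fun n x => max (-M) (min M (φ (n + 1) x))) ∧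
      ∀ᵐ x ∂(volume.restrict (Icc (0 : ℝ) 1)), ∀ n,
        max (-M) (min M (φ (n + 1) x)) = φ (n + 1) x := by
  have hM := hUB.1
  have hae : ∀ᵐ x ∂(volume.restrict (Icc (0 : ℝ) 1)), ∀ n,
      max (-M) (min M (φ (n + 1) x)) = φ (n + 1) x := by
    filter_upwards [ae_all_iff.mpr fun n => hUB.2 (n + 1) (Nat.le_add_left 1 n)] with x hx n
    rw [min_eq_right (abs_le.mp (hx n)).2, max_eq_right (abs_le.mp (hx n)).1]
  refine ⟨⟨fun n => measurable_const.max
    (measurable_const.min (hONS.1 _ (Nat.le_add_left 1 n))), fun n x => ?_, fun n m => ?_⟩, hae⟩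
  · exact abs_le.mpr ⟨le_max_left _ _, max_le (by linarith) (min_le_left _ _)⟩
  · have h1 := hONS.2 (n + 1) (m + 1) (Nat.le_add_left 1 n) (Nat.le_add_left 1 m)
    simp only [Nat.add_right_cancel_iff] at h1
    rw [← h1]
    refine integral_congr_ae ?_
    filter_upwards [hae] with x hx
    rw [hx n, hx m]

/-- Main theorem: for any uniformly bounded ONS `φ` and any `p ∈ P_ln` there exist a
measure preserving transformation `ω : [0,1] → [0,1]` and a function
`f ∈ L^{p(ω(·))}[0,1]` whose Fourier series with respect to `φ` diverges unboundedly
on a set of positive measure. -/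
theorem divergence_in_variable_exponent_space (φ : ℕ → ℝ → ℝ) (M : ℝ)
    (hONS : IsONS φ) (hUB : UnifBounded φ M) (p : ℝ → ℝ) (hp : MemPln p) :
    ∃ ω : ℝ → ℝ, MeasurePreserving01 ω ∧
      ∃ f : ℝ → ℝ, Measurable f ∧ vpNorm (fun t => p (ω t)) f < ⊤ ∧
        0 < volume {x ∈ Set.Icc (0:ℝ) 1 |
          ∀ B : ℝ, ∃ m : ℕ, 1 ≤ m ∧ B < |partialSum φ f m x|} := by
  obtain ⟨hφ, hae⟩ := isBddONS_clip hONS hUB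
  obtain ⟨ω, hω, f, hf, hfp, hdiv⟩ := hφ.exists_divergent hp
  refine ⟨ω, hω, f, hf, hfp, hdiv.trans_le ?_⟩
  have hcoef : ∀ n, ∫ z in Icc (0 : ℝ) 1, f z * max (-M) (min M (φ (n + 1) z))
      = fourierCoef φ f (n + 1) := by
    intro n
    refine integral_congr_ae ?_
    filter_upwards [hae] with x hx
    rw [hx n]
  calc (volume.restrict (Icc (0 : ℝ) 1)) {x | ∀ B : ℝ, ∃ m : ℕ, B < |∑ n ∈ Finset.range m,
        (∫ z in Icc (0 : ℝ) 1, f z * max (-M) (min M (φ (n + 1) z))) *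
          max (-M) (min M (φ (n + 1) x))|}
      ≤ (volume.restrict (Icc (0 : ℝ) 1)) {x ∈ Icc (0 : ℝ) 1 |
          ∀ B : ℝ, ∃ m : ℕ, 1 ≤ m ∧ B < |partialSum φ f m x|} := by
        refine measure_mono_ae ?_
        filter_upwards [hae, ae_restrict_mem measurableSet_Icc] with x hx hxI hxB
        refine ⟨hxI, fun B => ?_⟩
        obtain ⟨m, hm⟩ := hxB (max B 0)
        simp only [hcoef, hx] at hm
        have hsum : partialSum φ f m x
            = ∑ n ∈ Finset.range m, fourierCoef φ f (n + 1) * φ (n + 1) x := by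
          rw [partialSum, Finset.range_eq_Ico,
            Finset.sum_Ico_add' (fun n => fourierCoef φ f n * φ n x) 0 m 1]
          rfl
        rw [← hsum] at hm
        refine ⟨m, Nat.one_le_iff_ne_zero.mpr ?_, (le_max_left B 0).trans_lt hm⟩
        rintro rfl
        simp [partialSum] at hm
    _ ≤ volume {x ∈ Icc (0 : ℝ) 1 |
          ∀ B : ℝ, ∃ m : ℕ, 1 ≤ m ∧ B < |partialSum φ f m x|} := Measure.restrict_apply_le _ _
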